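/- arXiv:1803.02017 — 2 statements merged into one kernel-verified Lean document; each statement's English description precedes it below -/
import Mathlib

section
/- Let C be a clutter and let J = I(C)^∨ ⊆ R be its ideal of covers. If C is uniform and its set covering polyhedron Q(A) is integral, then: (a) depth(R/J^{(k)}) ≥ depth(R/J^{(k+1)}) for all k ≥ 1; (b) reg(R/J^{(k)}) ≤ reg(R/J^{(k+1)}) for all k ≥ 1. -/
/-!
The symbolic power `J^{(k)}` of the ideal of covers is the monomial ideal whose exponents `a`
satisfy `∑ i ∈ e, a i ≥ k` for all edges `e`, since the associated primes of `R/J` are generated by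
the edges. By uniformity the face of `Q(A)` given by `x(e) = 1` for all edges `e` is nonempty, and
by integrality it contains an integral point `c`, a set of vertices meeting every edge exactly once.
Consequently `J^{(k)} = J^{(k+1)} : x^c`, and it remains to compare a monomial ideal `I` with
`I : x^c`.

A minimal multigraded free resolution of `R/I` is given by the multidegrees of its bases and by
scalar matrices. Exactness in multidegree `a` only involves the basis elements of multidegree `≤ a`,
and `b - c ≤ a ↔ b ≤ a + c` for truncated subtraction, so replacing each multidegree `b` by `b - c`
and keeping the scalar matrices gives a resolution of `R/(I : x^c)`, in general not minimal, with
the same ranks and with twists that are not larger.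

* Regularity: every twist of a minimal resolution occurs in any other graded free resolution, so a
  bound on the twists of some resolution of `R/I` bounds those of the shifted one.
* Depth: `Ext^j(K, R)` vanishes for `j < n` but not for `j = n`. Hence the vanishing of
  `Ext^j(K, R/I)` for all `j ≤ i` forces the minimal resolution of `R/I` to be zero from homological
  degree `n - i` on, and any free resolution of that length forces the vanishing in turn.
-/

open MvPolynomial CategoryTheory Opposite

noncomputable section

/-- The polynomial ring `K[x_v : v ∈ σ]` over the field `K`. -/
abbrev MvPoly (K : Type) [Field K] (σ : Type) : Type := MvPolynomial σ K

variable (K : Type) [Field K] (σ : Type)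

/-- The graded maximal ideal `m = (x_v : v ∈ σ)` generated by all the variables. -/
def maxIdeal : Ideal (MvPoly K σ) := Ideal.span (Set.range MvPolynomial.X)

/-- The depth of `R/I` with respect to the graded maximal ideal, defined as
`inf { i | Ext^i(R/m, R/I) ≠ 0 }` (with value `⊤` for the zero module). -/
def depthQ (I : Ideal (MvPoly K σ)) : ℕ∞ :=
  sInf { d : ℕ∞ | ∃ i : ℕ, d = i ∧
    Nontrivial (((Ext (MvPoly K σ) (ModuleCat (MvPoly K σ)) i).obj
      (op (ModuleCat.of (MvPoly K σ) (MvPoly K σ ⧸ maxIdeal K σ)))).obj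
      (ModuleCat.of (MvPoly K σ) (MvPoly K σ ⧸ I))) }

/-- The degree-`e` homogeneous component condition, for an integer `e`
(for `e < 0` the component is zero). -/
def HomogComp (e : ℤ) (p : MvPoly K σ) : Prop :=
  if 0 ≤ e then p ∈ homogeneousSubmodule σ K e.toNat else p = 0

/-- `v` is a homogeneous element of degree `e` of the graded free module
`⊕_j R(-dg j)`. -/
def IsHomogVec {m : ℕ} (dg : Fin m → ℤ) (e : ℤ) (v : Fin m → MvPoly K σ) : Prop :=
  ∀ j, HomogComp K σ (e - dg j) (v j)

/-- The degree-`e` homogeneous component of `R/I`. -/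
def QuotComp (I : Ideal (MvPoly K σ)) (e : ℤ) : Submodule K (MvPoly K σ ⧸ I) :=
  if 0 ≤ e then
    Submodule.map (Ideal.Quotient.mkₐ K I).toLinearMap (homogeneousSubmodule σ K e.toNat)
  else ⊥

/-- A graded free resolution of `R/I` by finitely generated graded free modules
`F i = ⊕_{j < rk i} R(-dg i j)`, with degree preserving (degree zero) maps. -/
structure GradedFreeRes (I : Ideal (MvPoly K σ)) where
  rk : ℕ → ℕ
  dg : (i : ℕ) → Fin (rk i) → ℤ
  dmap : (i : ℕ) → ((Fin (rk (i + 1)) → MvPoly K σ) →ₗ[MvPoly K σ] (Fin (rk i) → MvPoly K σ))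
  aug : (Fin (rk 0) → MvPoly K σ) →ₗ[MvPoly K σ] (MvPoly K σ ⧸ I)
  aug_surj : Function.Surjective aug
  exact0 : Function.Exact (dmap 0) aug
  exactS : ∀ i, Function.Exact (dmap (i + 1)) (dmap i)
  graded : ∀ i (e : ℤ) v, IsHomogVec K σ (dg (i + 1)) e v → IsHomogVec K σ (dg i) e (dmap i v)
  aug_graded : ∀ (e : ℤ) v, IsHomogVec K σ (dg 0) e v → aug v ∈ QuotComp K σ I e

/-- `R/I` admits a graded free resolution all of whose twists `dg i j` satisfy
`dg i j - i ≤ r`. -/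
def ResBound (I : Ideal (MvPoly K σ)) (r : ℤ) : Prop :=
  ∃ F : GradedFreeRes K σ I, ∀ i j, F.dg i j - i ≤ r

open Classical in
/-- The Castelnuovo–Mumford regularity of `R/I`: the least `r` bounding the twists of
a graded free resolution of `R/I` (with the convention `⊥ = -∞` for the zero module). -/
def CMreg (I : Ideal (MvPoly K σ)) : WithBot ℤ :=
  if h : ∃ r : ℤ, ResBound K σ I r ∧ ∀ s : ℤ, ResBound K σ I s → r ≤ s
  then ((h.choose : ℤ) : WithBot ℤ) else ⊥

variable {n : ℕ}

/-- The monomial `x^a`. -/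
def mono (K : Type) [Field K] {n : ℕ} (a : Fin n →₀ ℕ) : MvPoly K (Fin n) :=
  MvPolynomial.monomial a 1

/-- A monomial ideal: an ideal generated by monomials. -/
def IsMonomialIdeal (I : Ideal (MvPoly K (Fin n))) : Prop :=
  ∃ S : Set (Fin n →₀ ℕ), I = Ideal.span (mono K '' S)

/-- A squarefree exponent vector. -/
def SqfreeExp (a : Fin n →₀ ℕ) : Prop := ∀ i, a i ≤ 1

/-- A squarefree monomial ideal: an ideal generated by squarefree monomials. -/
def IsSqfreeMonomialIdeal (I : Ideal (MvPoly K (Fin n))) : Prop :=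
  ∃ S : Set (Fin n →₀ ℕ), (∀ a ∈ S, SqfreeExp a) ∧ I = Ideal.span (mono K '' S)

/-- A clutter on the vertex set `Fin n`: a family of edges none of which contains another. -/
structure Clutter (n : ℕ) where
  edges : Finset (Finset (Fin n))
  antichain : ∀ e ∈ edges, ∀ f ∈ edges, e ⊆ f → e = f

namespace Clutter

variable {n : ℕ}

/-- The edge ideal of a clutter, generated by the squarefree monomials
`x_e = ∏_{i ∈ e} x_i` for the edges `e`. -/
def edgeIdeal (K : Type) [Field K] (C : Clutter n) : Ideal (MvPoly K (Fin n)) :=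
  Ideal.span ((fun e : Finset (Fin n) => ∏ i ∈ e, (MvPolynomial.X i : MvPoly K (Fin n))) ''
    ↑C.edges)

/-- `c` is a vertex cover of `C`: it meets every edge. -/
def IsCover (C : Clutter n) (c : Finset (Fin n)) : Prop :=
  ∀ e ∈ C.edges, ∃ i ∈ e, i ∈ c

/-- `c` is a minimal vertex cover of `C`. -/
def IsMinCover (C : Clutter n) (c : Finset (Fin n)) : Prop :=
  IsCover C c ∧ ∀ d ⊆ c, IsCover C d → d = c

open Classical in
/-- The clutter of minimal vertex covers (the Alexander dual clutter `C^∨`). -/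
def dual (C : Clutter n) : Clutter n where
  edges := Finset.univ.filter fun c => IsMinCover C c
  antichain := by
    intro e he f hf hef
    simp only [Finset.mem_filter] at he hf
    exact hf.2.2 e hef he.2.1

/-- The ideal of covers (Alexander dual ideal) of a clutter: the edge ideal of `C^∨`. -/
def coverIdeal (K : Type) [Field K] (C : Clutter n) : Ideal (MvPoly K (Fin n)) :=
  edgeIdeal K (dual C)

open Classical in
/-- Deletion `C ∖ V`: delete all edges of `C` that intersect `V`. -/
def del (C : Clutter n) (V : Finset (Fin n)) : Clutter n where
  edges := C.edges.filter fun e => ∀ i ∈ V, i ∉ e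
  antichain := by
    intro e he f hf hef
    simp only [Finset.mem_filter] at he hf
    exact C.antichain e he.1 f hf.1 hef

/-- All minimal vertex covers of `C` have the same cardinality. -/
def Unmixed (C : Clutter n) : Prop :=
  ∀ c d, IsMinCover C c → IsMinCover C d → c.card = d.card

/-- All edges of `C` have the same cardinality. -/
def Uniform (C : Clutter n) : Prop :=
  ∀ e ∈ C.edges, ∀ f ∈ C.edges, e.card = f.card

/-- The set covering polyhedron `Q(A) = {x ∈ ℝ^n : x ≥ 0, xA ≥ 1}` of the clutter. -/
def coverPolyhedron (C : Clutter n) : Set (Fin n → ℝ) :=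
  { x | (∀ i, 0 ≤ x i) ∧ ∀ e ∈ C.edges, 1 ≤ ∑ i ∈ e, x i }

/-- The set covering polyhedron is integral: all of its vertices (extreme points)
have integer coordinates. -/
def IntegralPolyhedron (C : Clutter n) : Prop :=
  ∀ x ∈ Set.extremePoints ℝ (coverPolyhedron C), ∀ i, ∃ z : ℤ, x i = (z : ℝ)

open Classical in
/-- The max-flow min-cut property: for every nonnegative integral vector `α` both sides of
the LP-duality equation `min{⟨α,x⟩ : x ≥ 0, xA ≥ 1} = max{⟨y,1⟩ : y ≥ 0, Ay ≤ α}`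
have integral optimum solutions. -/
def HasMFMC (C : Clutter n) : Prop :=
  ∀ α : Fin n → ℕ,
    ∃ x : Fin n → ℕ,
      ((fun i => (x i : ℝ)) ∈ coverPolyhedron C ∧
        ∀ z ∈ coverPolyhedron C, ∑ i, (α i : ℝ) * x i ≤ ∑ i, (α i : ℝ) * z i) ∧
    ∃ y : Finset (Fin n) → ℕ,
      ((∀ e, e ∉ C.edges → y e = 0) ∧
        (∀ i, ∑ e ∈ C.edges.filter (fun e => i ∈ e), y e ≤ α i) ∧
        (∀ y' : Finset (Fin n) → ℝ, (∀ e, 0 ≤ y' e) → (∀ e, e ∉ C.edges → y' e = 0) →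
          (∀ i, ∑ e ∈ C.edges.filter (fun e => i ∈ e), y' e ≤ (α i : ℝ)) →
          ∑ e ∈ C.edges, y' e ≤ ∑ e ∈ C.edges, (y e : ℝ))) ∧
      (∑ i, (α i : ℝ) * x i = ∑ e ∈ C.edges, (y e : ℝ))

end Clutter

open Classical in
/-- The unique clutter whose edge ideal is a given squarefree monomial ideal `I`:
its edges are the minimal supports of squarefree monomials belonging to `I`. -/
def clutterOf (K : Type) [Field K] {n : ℕ} (I : Ideal (MvPoly K (Fin n))) : Clutter n where
  edges := Finset.univ.filter fun e =>
    ((∏ i ∈ e, MvPolynomial.X i : MvPoly K (Fin n)) ∈ I ∧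
      ∀ f ⊆ e, (∏ i ∈ f, MvPolynomial.X i : MvPoly K (Fin n)) ∈ I → f = e)
  antichain := by
    intro e he f hf hef
    simp only [Finset.mem_filter] at he hf
    exact hf.2.2 e hef he.2.1

/-- The Alexander dual of a squarefree monomial ideal. -/
def idealDual (K : Type) [Field K] {n : ℕ} (I : Ideal (MvPoly K (Fin n))) :
    Ideal (MvPoly K (Fin n)) :=
  Clutter.coverIdeal K (clutterOf K I)

/-- The `k`-th symbolic power of a squarefree monomial ideal `J`:
`J^{(k)} = ⋂_{p ∈ Ass(R/J)} p^k`. -/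
def symbPow (K : Type) [Field K] {σ : Type} (J : Ideal (MvPoly K σ)) (k : ℕ) :
    Ideal (MvPoly K σ) :=
  ⨅ p ∈ associatedPrimes (MvPoly K σ) (MvPoly K σ ⧸ J), p ^ k

end

/-! ### Regular sequences and `Ext` -/

section ExtVanishing

universe w v u

variable {C : Type u} [Category.{v} C] [Abelian C] [HasExt.{w} C] {S : ShortComplex C} {N : C}
  {i : ℕ}

theorem subsingleton_ext_X₁ (hS : S.ShortExact)
    (h₃ : ∀ j, j + 1 = i → Subsingleton (Abelian.Ext N S.X₃ j))
    (hf : ∀ x : Abelian.Ext N S.X₁ i, x.comp (.mk₀ S.f) (add_zero i) = 0) :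
    Subsingleton (Abelian.Ext N S.X₁ i) := by
  refine subsingleton_of_forall_eq 0 fun x => ?_
  cases i with
  | zero =>
    have := hS.mono_f
    exact Abelian.Ext.postcomp_mk₀_injective_of_mono N S.f ((hf x).trans (by simp))
  | succ i =>
    have := h₃ i rfl
    obtain ⟨y, rfl⟩ := Abelian.Ext.covariant_sequence_exact₁ N hS x (hf x) rfl
    rw [Subsingleton.elim y 0, Abelian.Ext.zero_comp]

theorem subsingleton_ext_X₃ (hS : S.ShortExact) (h₂ : Subsingleton (Abelian.Ext N S.X₂ i))
    (h₁ : Subsingleton (Abelian.Ext N S.X₁ (i + 1))) : Subsingleton (Abelian.Ext N S.X₃ i) := by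
  refine subsingleton_of_forall_eq 0 fun x => ?_
  obtain ⟨y, rfl⟩ := Abelian.Ext.covariant_sequence_exact₃ N hS x rfl (Subsingleton.elim _ 0)
  rw [Subsingleton.elim y 0, Abelian.Ext.zero_comp]

theorem subsingleton_ext_of_retract {A B : C} (r : Retract A B)
    (h : Subsingleton (Abelian.Ext N B i)) : Subsingleton (Abelian.Ext N A i) := by
  refine subsingleton_of_forall_eq 0 fun x => ?_
  calc x = (x.comp (.mk₀ r.i) (add_zero i)).comp (.mk₀ r.r) (add_zero i) := by simp
    _ = 0 := by rw [Subsingleton.elim (x.comp _ _) 0, Abelian.Ext.zero_comp]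

theorem subsingleton_ext_congr {A B : C} (e : A ≅ B) :
    Subsingleton (Abelian.Ext N A i) ↔ Subsingleton (Abelian.Ext N B i) :=
  ⟨subsingleton_ext_of_retract e.symm.retract, subsingleton_ext_of_retract e.retract⟩

end ExtVanishing

section
universe u

variable {R : Type u} [CommRing R] {N : ModuleCat.{u} R} {i : ℕ}

theorem subsingleton_ext_of_subsingleton (M : ModuleCat.{u} R) [Subsingleton M] :
    Subsingleton (Abelian.Ext N M i) := by
  refine subsingleton_of_forall_eq 0 fun x => ?_
  rw [← x.comp_mk₀_id, (ModuleCat.isZero_of_subsingleton M).eq_zero_of_src (𝟙 M)]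
  simp

theorem subsingleton_ext_pi {ι : Type} [Finite ι] {M : Type u} [AddCommGroup M] [Module R M]
    (h : Subsingleton (Abelian.Ext N (ModuleCat.of R M) i)) :
    Subsingleton (Abelian.Ext N (ModuleCat.of R (ι → M)) i) := by
  have := Fintype.ofFinite ι
  refine (subsingleton_ext_congr (ModuleCat.biproductIsoPi fun _ : ι => ModuleCat.of R M)).1 ?_
  exact (Abelian.Ext.addEquivBiproduct N (Limits.biproduct.isBilimit _) i).subsingleton

theorem comp_mk₀_eq_zero_of_mem_smul_top {A B : Type u} [AddCommGroup A] [Module R A]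
    [AddCommGroup B] [Module R B] {f : A →ₗ[R] B}
    (hf : f ∈ Module.annihilator R N • (⊤ : Submodule R (A →ₗ[R] B)))
    (x : Abelian.Ext N (ModuleCat.of R A) i) :
    x.comp (.mk₀ (ModuleCat.ofHom f)) (add_zero i) = 0 := by
  refine Submodule.smul_induction_on hf (fun r hr g _ => ?_) fun f g hf hg => ?_
  · have hN : r • 𝟙 N = 0 := by
      simp [← ModuleCat.lsmul_eq_smul_id, Module.mem_annihilator_iff_lsmul_eq_zero.mp hr]
    have hx : r • x = 0 := by
      rw [← x.mk₀_id_comp, ← Abelian.Ext.smul_comp, ← Abelian.Ext.mk₀_smul, hN]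
      simp
    change x.comp (Abelian.Ext.mk₀ (r • ModuleCat.ofHom g)) _ = 0
    rw [Abelian.Ext.mk₀_smul, Abelian.Ext.comp_smul, ← Abelian.Ext.smul_comp, hx,
      Abelian.Ext.zero_comp]
  · rw [ModuleCat.ofHom_add, Abelian.Ext.mk₀_add, Abelian.Ext.comp_add, hf, hg, add_zero]

theorem mem_smul_top_of_forall_apply_mem {ι κ : Type*} [Finite ι] [Finite κ] {I : Ideal R}
    {f : (ι → R) →ₗ[R] (κ → R)} (hf : ∀ v j, f v j ∈ I) :
    f ∈ I • (⊤ : Submodule R ((ι → R) →ₗ[R] (κ → R))) := by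
  classical
  have := Fintype.ofFinite ι
  have := Fintype.ofFinite κ
  rw [← Matrix.toLin'_toMatrix' f, Matrix.matrix_eq_sum_single (LinearMap.toMatrix' f)]
  simp only [map_sum]
  refine sum_mem fun j _ => sum_mem fun k _ => ?_
  rw [← mul_one (LinearMap.toMatrix' f j k), ← smul_eq_mul, ← Matrix.smul_single, map_smul]
  exact Submodule.smul_mem_smul (hf _ _) trivial

theorem comp_mk₀_smulShortComplex_f {M : ModuleCat.{u} R} {r : R}
    (hN : r ∈ Module.annihilator R N) (x : Abelian.Ext N M i) :
    x.comp (.mk₀ (M.smulShortComplex r).f) (add_zero i) = 0 :=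
  DFunLike.congr_fun (congrArg AddCommGrpCat.Hom.hom
    (Abelian.Ext.postcomp_smul_id_eq_zero_of_mem_annihilator (M := M) hN i)) x

section RegularSequence

open RingTheory.Sequence

theorem subsingleton_ext_quotSMulTop_iff {M : Type u} [AddCommGroup M] [Module R M] {r : R}
    (hN : r ∈ Module.annihilator R N) (hM : IsSMulRegular M r) :
    Subsingleton (Abelian.Ext N (ModuleCat.of R (QuotSMulTop r M)) i) ↔
      Subsingleton (Abelian.Ext N (ModuleCat.of R M) i) ∧
        Subsingleton (Abelian.Ext N (ModuleCat.of R M) (i + 1)) := by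
  have hS : ((ModuleCat.of R M).smulShortComplex r).ShortExact := hM.smulShortComplex_shortExact
  refine ⟨fun h => ⟨subsingleton_of_forall_eq 0 fun x => ?_, ?_⟩,
    fun h => subsingleton_ext_X₃ hS h.1 h.2⟩
  · obtain ⟨y, rfl⟩ := Abelian.Ext.covariant_sequence_exact₂ N hS x
      (Subsingleton.elim (α := Abelian.Ext N (ModuleCat.of R (QuotSMulTop r M)) i) _ 0)
    exact comp_mk₀_smulShortComplex_f hN y
  · refine subsingleton_ext_X₁ hS (fun j hj => ?_) (comp_mk₀_smulShortComplex_f hN)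
    rwa [Nat.succ_injective hj]

variable [IsNoetherianRing R] [Module.Finite R N]

theorem subsingleton_ext_of_lt_length {M : Type u} [AddCommGroup M] [Module R M]
    [Module.Finite R M] {rs : List R} (hM : IsRegular M rs)
    (hN : Ideal.ofList rs ≤ Module.annihilator R N) (hi : i < rs.length) :
    Subsingleton (Abelian.Ext N (ModuleCat.of R M) i) :=
  ModuleCat.subsingleton_ext_of_exists_isRegular (Ideal.ofList rs) N
    (Module.support_eq_zeroLocus.trans_subset (PrimeSpectrum.zeroLocus_anti_mono_ideal hN))
    (ModuleCat.of R M) hM.top_ne_smul.symm.lt_top rs (fun _ hr => Ideal.subset_span hr) hM i hi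

theorem subsingleton_ext_length_iff {M : Type u} [AddCommGroup M] [Module R M]
    [Module.Finite R M] {rs : List R} (hM : IsRegular M rs)
    (hN : Ideal.ofList rs ≤ Module.annihilator R N) :
    Subsingleton (Abelian.Ext N (ModuleCat.of R M) rs.length) ↔
      Subsingleton (N →ₗ[R] M ⧸ (Ideal.ofList rs • ⊤ : Submodule R M)) := by
  induction rs generalizing M with
  | nil =>
    rw [List.length_nil,
      (Abelian.Ext.addEquiv₀.trans ModuleCat.homAddEquiv).toEquiv.subsingleton_congr]
    exact (LinearEquiv.congrRight (Submodule.quotEquivOfEqBot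
      (Ideal.ofList [] • ⊤ : Submodule R M) (by simp [Ideal.ofList]))).symm.subsingleton_congr
  | cons r rs ih =>
    have hlt := subsingleton_ext_of_lt_length hM hN (by simp : rs.length < (r :: rs).length)
    obtain ⟨hr, hrs⟩ := (isRegular_cons_iff M r rs).1 hM
    obtain ⟨hrN, hrsN⟩ := sup_le_iff.1 ((Ideal.ofList_cons r rs).symm.trans_le hN)
    rw [(LinearEquiv.congrRight (Submodule.quotOfListConsSMulTopEquivQuotSMulTopInner
        M r rs)).toEquiv.subsingleton_congr, ← ih hrs hrsN,
      subsingleton_ext_quotSMulTop_iff ((Ideal.span_singleton_le_iff_mem _).1 hrN) hr,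
      List.length_cons, and_iff_right hlt]

theorem nontrivial_ext_length {rs : List R} (hR : IsRegular R rs) :
    Nontrivial (Abelian.Ext (ModuleCat.of R (R ⧸ Ideal.ofList rs)) (ModuleCat.of R R)
      rs.length) := by
  have := Ideal.Quotient.nontrivial_iff.2
    (show Ideal.ofList rs ≠ ⊤ by simpa using hR.top_ne_smul.symm)
  rw [← not_subsingleton_iff_nontrivial,
    subsingleton_ext_length_iff hR (Ideal.annihilator_quotient).ge, not_subsingleton_iff_nontrivial]
  let e : (R ⧸ Ideal.ofList rs) ≃ₗ[R] R ⧸ (Ideal.ofList rs • ⊤ : Submodule R R) :=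
    Submodule.quotEquivOfEq _ _ (by simp)
  exact ⟨e.toLinearMap, 0, fun h => one_ne_zero <| e.injective <|
    (DFunLike.congr_fun h 1).trans (map_zero e).symm⟩

end RegularSequence

end

section PolynomialRing

open RingTheory.Sequence

variable {R σ : Type*} [CommRing R]

theorem isSMulRegular_X_quotient_span {s : Set σ} {i : σ} (hi : i ∉ s) :
    IsSMulRegular (MvPolynomial σ R ⧸ Ideal.span (X '' s : Set (MvPolynomial σ R)))
      (X i : MvPolynomial σ R) := by
  refine (isSMulRegular_quotient_iff_mem_of_smul_mem _ _).2 fun p hp => ?_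
  rw [smul_eq_mul, mul_comm, mem_ideal_span_X_image] at hp
  refine mem_ideal_span_X_image.2 fun a ha => ?_
  obtain ⟨j, hj, hne⟩ := hp (a + Finsupp.single i 1) (by
    rwa [mem_support_iff, coeff_mul_X, ← mem_support_iff])
  exact ⟨j, hj, by simpa [Finsupp.single_apply, (ne_of_mem_of_not_mem hj hi).symm] using hne⟩

theorem ofList_map_X (l : List σ) :
    Ideal.ofList (l.map X) = Ideal.span (X '' {i | i ∈ l} : Set (MvPolynomial σ R)) :=
  congrArg Ideal.span (by ext; simp)

theorem isWeaklyRegular_map_X {l : List σ} (hl : l.Nodup) :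
    IsWeaklyRegular (MvPolynomial σ R) (l.map X : List (MvPolynomial σ R)) := by
  induction l using List.reverseRecOn with
  | nil => simp
  | append_singleton l i ih =>
    obtain ⟨hl, -, hi⟩ := List.nodup_append.1 hl
    rw [List.map_append, isWeaklyRegular_append_iff]
    refine ⟨ih hl, (isWeaklyRegular_singleton_iff _ _).2 ?_⟩
    rw [smul_eq_mul, Ideal.mul_top, ofList_map_X]
    exact isSMulRegular_X_quotient_span fun h => hi i h i (by simp) rfl

end PolynomialRing

section ResidueModule

variable {K : Type} [Field K] {σ : Type}

theorem mem_maxIdeal_iff {p : MvPoly K σ} : p ∈ maxIdeal K σ ↔ constantCoeff p = 0 := by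
  rw [maxIdeal, ← Set.image_univ, mem_ideal_span_X_image, constantCoeff_eq, ← notMem_support_iff]
  refine ⟨fun h h0 => by simpa using h 0 h0, fun h a ha => ?_⟩
  by_contra! h0
  exact h ((Finsupp.ext fun i => h0 i trivial : a = 0) ▸ ha)

variable (K σ) in
/-- The residue field `R/m` of the polynomial ring `R`, as an `R`-module. -/
noncomputable abbrev residueModule : ModuleCat (MvPoly K σ) :=
  ModuleCat.of (MvPoly K σ) (MvPoly K σ ⧸ maxIdeal K σ)

theorem annihilator_residueModule :
    Module.annihilator (MvPoly K σ) (residueModule K σ) = maxIdeal K σ :=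
  Ideal.annihilator_quotient

variable [Fintype σ]

theorem maxIdeal_eq_ofList :
    maxIdeal K σ = Ideal.ofList ((Finset.univ.toList (α := σ)).map X) := by
  rw [ofList_map_X, maxIdeal, ← Set.image_univ]
  simp

theorem isRegular_map_X :
    RingTheory.Sequence.IsRegular (MvPoly K σ)
      ((Finset.univ.toList (α := σ)).map X : List (MvPoly K σ)) where
  toIsWeaklyRegular := isWeaklyRegular_map_X (Finset.nodup_toList _)
  top_ne_smul h := by
    rw [← maxIdeal_eq_ofList, smul_eq_mul, Ideal.mul_top, eq_comm, Ideal.eq_top_iff_one,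
      mem_maxIdeal_iff] at h
    simp at h

theorem subsingleton_ext_residueModule_ring {i : ℕ} (hi : i < Fintype.card σ) :
    Subsingleton (Abelian.Ext (residueModule K σ) (ModuleCat.of (MvPoly K σ) (MvPoly K σ)) i) :=
  subsingleton_ext_of_lt_length isRegular_map_X
    (maxIdeal_eq_ofList.symm.trans annihilator_residueModule.symm).le (by simpa using hi)

variable (K σ) in
theorem nontrivial_ext_residueModule_ring :
    Nontrivial (Abelian.Ext (residueModule K σ) (ModuleCat.of (MvPoly K σ) (MvPoly K σ))
      (Fintype.card σ)) := by
  have h := nontrivial_ext_length (isRegular_map_X (K := K) (σ := σ))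
  rwa [← maxIdeal_eq_ofList, List.length_map, Finset.length_toList, Finset.card_univ] at h

end ResidueModule

/-! ### Minimal resolutions and depth -/

namespace GradedFreeRes

variable {K : Type} [Field K] {σ : Type} {I : Ideal (MvPoly K σ)} (F : GradedFreeRes K σ I)

/-- A graded free resolution is minimal if its differentials vanish modulo the graded maximal
ideal, i.e. if all their matrix entries have zero constant term. -/
def IsMinimal : Prop := ∀ i v j, constantCoeff (F.dmap i v j) = 0

/-- A graded free resolution is finite if its terms vanish from some point on. -/
def IsFinite : Prop := ∃ l, ∀ i, l ≤ i → F.rk i = 0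

/-- The `k`-th syzygy module of a resolution, embedded in the term in degree `k - 1`; the
zeroth one is the resolved module `R/I`. -/
noncomputable def syzygy : ℕ → ModuleCat (MvPoly K σ)
  | 0 => ModuleCat.of _ (MvPoly K σ ⧸ I)
  | k + 1 => ModuleCat.of _ (LinearMap.range (F.dmap k))

/-- The canonical surjection of the term in degree `k` onto the `k`-th syzygy module. -/
noncomputable def toSyzygy : (k : ℕ) → (Fin (F.rk k) → MvPoly K σ) →ₗ[MvPoly K σ] F.syzygy k
  | 0 => F.aug
  | k + 1 => (F.dmap k).rangeRestrict

theorem toSyzygy_surjective : ∀ k, Function.Surjective (F.toSyzygy k)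
  | 0 => F.aug_surj
  | k + 1 => (F.dmap k).surjective_rangeRestrict

theorem exact_dmap_toSyzygy : ∀ k, Function.Exact (F.dmap k) (F.toSyzygy k)
  | 0 => F.exact0
  | k + 1 => fun v => by
    rw [← F.exactS k v]
    exact Subtype.ext_iff

/-- The short exact sequence `0 → Z_{k+1} → F_k → Z_k → 0` relating the syzygy modules. -/
noncomputable def syzygyShortComplex (k : ℕ) : ShortComplex (ModuleCat (MvPoly K σ)) where
  X₁ := F.syzygy (k + 1)
  X₂ := ModuleCat.of _ (Fin (F.rk k) → MvPoly K σ)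
  X₃ := F.syzygy k
  f := ModuleCat.ofHom (LinearMap.range (F.dmap k)).subtype
  g := ModuleCat.ofHom (F.toSyzygy k)
  zero := by
    ext ⟨v, hv⟩
    exact (F.exact_dmap_toSyzygy k v).2 hv

theorem syzygyShortComplex_shortExact (k : ℕ) : (F.syzygyShortComplex k).ShortExact :=
  ModuleCat.shortComplex_shortExact _
    (fun v => (F.exact_dmap_toSyzygy k v).trans
      (show v ∈ LinearMap.range (F.dmap k) ↔ _ from Subtype.range_coe.symm ▸ Iff.rfl))
    Subtype.val_injective (F.toSyzygy_surjective k)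

theorem subsingleton_syzygy {k : ℕ} (h : F.rk k = 0) : Subsingleton (F.syzygy k) := by
  have : IsEmpty (Fin (F.rk k)) := h ▸ Fin.isEmpty'
  exact (F.toSyzygy_surjective k).subsingleton

theorem isIso_toSyzygy {k : ℕ} (h : F.rk (k + 1) = 0) : IsIso (ModuleCat.ofHom (F.toSyzygy k)) := by
  have := F.subsingleton_syzygy h
  exact (F.syzygyShortComplex_shortExact k).isIso_g_iff.2
    (ModuleCat.isZero_of_subsingleton (F.syzygy (k + 1)))

section Depth

variable {N : ModuleCat (MvPoly K σ)} {d i k : ℕ}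

theorem subsingleton_ext_syzygy {m : ℕ}
    (hR : ∀ m < d, Subsingleton (Abelian.Ext N (ModuleCat.of _ (MvPoly K σ)) m))
    (hI : ∀ j ≤ i, Subsingleton (Abelian.Ext N (ModuleCat.of _ (MvPoly K σ ⧸ I)) j))
    (hm : m ≤ i + k) (hmd : m < d) : Subsingleton (Abelian.Ext N (F.syzygy k) m) := by
  induction k generalizing m with
  | zero => exact hI m hm
  | succ k ih =>
    have hFk := subsingleton_ext_pi (ι := Fin (F.rk k)) (hR m hmd)
    exact subsingleton_ext_X₁ (F.syzygyShortComplex_shortExact k)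
      (fun j hj => ih (by lia) (by lia)) fun x => hFk.elim _ _

theorem subsingleton_ext_syzygy_of_rk_eq_zero
    (hR : ∀ m < d, Subsingleton (Abelian.Ext N (ModuleCat.of _ (MvPoly K σ)) m))
    (h : ∀ k, d ≤ i + k → F.rk k = 0) :
    Subsingleton (Abelian.Ext N (F.syzygy k) (i + k)) := by
  induction hl : d - (i + k) generalizing k with
  | zero =>
    have := F.subsingleton_syzygy (h k (by lia))
    exact subsingleton_ext_of_subsingleton _
  | succ l ih =>
    exact subsingleton_ext_X₃ (F.syzygyShortComplex_shortExact k)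
      (subsingleton_ext_pi (hR _ (by lia))) (ih (k := k + 1) (by lia))

end Depth

variable {F} {i k : ℕ}

theorem IsMinimal.comp_mk₀_dmap (hF : F.IsMinimal)
    (x : Abelian.Ext (residueModule K σ) (ModuleCat.of _ (Fin (F.rk (k + 1)) → MvPoly K σ)) i) :
    x.comp (.mk₀ (ModuleCat.ofHom (F.dmap k))) (add_zero i) = 0 := by
  have h : F.dmap k ∈ maxIdeal K σ • (⊤ : Submodule (MvPoly K σ) _) :=
    mem_smul_top_of_forall_apply_mem fun v j => mem_maxIdeal_iff.2 (hF k v j)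
  rw [← annihilator_residueModule] at h
  exact comp_mk₀_eq_zero_of_mem_smul_top h x

theorem IsMinimal.comp_mk₀_subtype (hF : F.IsMinimal) (hk : F.rk (k + 2) = 0)
    (x : Abelian.Ext (residueModule K σ) (F.syzygyShortComplex k).X₁ i) :
    x.comp (.mk₀ (F.syzygyShortComplex k).f) (add_zero i) = 0 := by
  let g : ModuleCat.of _ (Fin (F.rk (k + 1)) → MvPoly K σ) ⟶ (F.syzygyShortComplex k).X₁ :=
    ModuleCat.ofHom (F.toSyzygy (k + 1))
  have : IsIso g := F.isIso_toSyzygy hk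
  calc x.comp (.mk₀ (F.syzygyShortComplex k).f) (add_zero i)
    _ = ((x.comp (.mk₀ (inv g)) (add_zero i)).comp (.mk₀ g) (add_zero i)).comp
          (.mk₀ (F.syzygyShortComplex k).f) (add_zero i) := by simp
    _ = (x.comp (.mk₀ (inv g)) (add_zero i)).comp
          (.mk₀ (g ≫ (F.syzygyShortComplex k).f)) (add_zero i) := by simp
    _ = 0 := hF.comp_mk₀_dmap _

theorem rk_eq_zero_of_subsingleton_ext {N : ModuleCat (MvPoly K σ)}
    (hR : Nontrivial (Abelian.Ext N (ModuleCat.of _ (MvPoly K σ)) i))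
    (h : Subsingleton (Abelian.Ext N (ModuleCat.of _ (Fin (F.rk k) → MvPoly K σ)) i)) :
    F.rk k = 0 := by
  by_contra h0
  let j : Fin (F.rk k) := ⟨0, Nat.pos_of_ne_zero h0⟩
  have r : Retract (ModuleCat.of _ (MvPoly K σ)) (ModuleCat.of _ (Fin (F.rk k) → MvPoly K σ)) :=
    { i := ModuleCat.ofHom (LinearMap.single (MvPoly K σ) (fun _ => MvPoly K σ) j)
      r := ModuleCat.ofHom (LinearMap.proj j)
      retract := by ext; simp }
  exact not_subsingleton_iff_nontrivial.2 hR (subsingleton_ext_of_retract r h)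

variable [Fintype σ]

theorem IsMinimal.rk_eq_zero_of_rk_succ_eq_zero (hF : F.IsMinimal)
    (hI : ∀ j ≤ i, Subsingleton
      (Abelian.Ext (residueModule K σ) (ModuleCat.of _ (MvPoly K σ ⧸ I)) j))
    (hk : Fintype.card σ ≤ i + k) (h : F.rk (k + 1) = 0) : F.rk k = 0 := by
  have hZ : Subsingleton (Abelian.Ext (residueModule K σ) (F.syzygy k) (Fintype.card σ)) := by
    cases k with
    | zero => exact hI _ hk
    | succ k =>
      exact subsingleton_ext_X₁ (F.syzygyShortComplex_shortExact k)
        (fun j hj => F.subsingleton_ext_syzygy (fun m => subsingleton_ext_residueModule_ring) hI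
          (by lia) (by lia)) (hF.comp_mk₀_subtype h)
  have := F.isIso_toSyzygy h
  exact rk_eq_zero_of_subsingleton_ext (nontrivial_ext_residueModule_ring K σ)
    ((subsingleton_ext_congr (asIso (ModuleCat.ofHom (F.toSyzygy k)))).2 hZ)

theorem IsMinimal.rk_eq_zero (hF : F.IsMinimal) (hfin : F.IsFinite)
    (hI : ∀ j ≤ i, Subsingleton
      (Abelian.Ext (residueModule K σ) (ModuleCat.of _ (MvPoly K σ ⧸ I)) j))
    (hk : Fintype.card σ ≤ i + k) : F.rk k = 0 := by
  obtain ⟨l, hl⟩ := hfin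
  induction hm : l - k generalizing k with
  | zero => exact hl k (by lia)
  | succ m ih => exact hF.rk_eq_zero_of_rk_succ_eq_zero hI hk (ih (by lia) (by lia))

end GradedFreeRes

section DerivedExt

universe v u

variable {A : Type*} [Ring A] {C : Type u} [Category.{v} C] [Abelian C] [Linear A C]
  {X Y : C} (P : ProjectiveResolution X) {i : ℕ}

section

variable [EnoughProjectives C]

variable (A) in
theorem isZero_derivedExt_zero_iff :
    Limits.IsZero (((Ext A C 0).obj (op X)).obj Y) ↔
      ∀ f : P.complex.X 0 ⟶ Y, P.complex.d 1 0 ≫ f = 0 → f = 0 := by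
  rw [(P.isoExt 0 Y).isZero_iff, ← HomologicalComplex.exactAt_iff_isZero_homology,
    HomologicalComplex.exactAt_iff' _ 0 0 1 (by simp) (by simp), ShortComplex.moduleCat_exact_iff]
  have hd : (P.complex.linearYonedaObj A Y).d 0 0 = 0 := HomologicalComplex.shape _ _ _ (by simp)
  refine forall₂_congr fun f _ => ⟨fun ⟨g, hg⟩ => ?_, fun hf => ⟨0, (map_zero _).trans hf.symm⟩⟩
  exact hg.symm.trans (LinearMap.congr_fun (congrArg ModuleCat.Hom.hom hd) g)

variable (A) in
theorem isZero_derivedExt_succ_iff :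
    Limits.IsZero (((Ext A C (i + 1)).obj (op X)).obj Y) ↔
      ∀ f : P.complex.X (i + 1) ⟶ Y, P.complex.d (i + 2) (i + 1) ≫ f = 0 →
        ∃ g : P.complex.X i ⟶ Y, P.complex.d (i + 1) i ≫ g = f := by
  rw [(P.isoExt (i + 1) Y).isZero_iff, ← HomologicalComplex.exactAt_iff_isZero_homology,
    HomologicalComplex.exactAt_iff' _ i (i + 1) (i + 2) (by simp) (by simp),
    ShortComplex.moduleCat_exact_iff]
  rfl

end

theorem subsingleton_hom_iff_of_projectiveResolution :
    Subsingleton (X ⟶ Y) ↔ ∀ f : P.complex.X 0 ⟶ Y, P.complex.d 1 0 ≫ f = 0 → f = 0 := by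
  refine ⟨fun _ f hf => ?_, fun h => subsingleton_of_forall_eq 0 fun g => ?_⟩
  · have h0 : P.exact₀.desc f hf = 0 := Subsingleton.elim (α := X ⟶ Y) _ _
    rw [← P.exact₀.g_desc f hf, h0, Limits.comp_zero]
  · have hπ : P.complex.d 1 0 ≫ P.π.f 0 ≫ g = 0 :=
      (P.complex_d_comp_π_f_zero_assoc g).trans Limits.zero_comp
    exact (cancel_epi (P.π.f 0)).1 ((h _ hπ).trans Limits.comp_zero.symm)

theorem subsingleton_ext_succ_iff [HasExt C] :
    Subsingleton (Abelian.Ext X Y (i + 1)) ↔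
      ∀ f : P.complex.X (i + 1) ⟶ Y, P.complex.d (i + 2) (i + 1) ≫ f = 0 →
        ∃ g : P.complex.X i ⟶ Y, P.complex.d (i + 1) i ≫ g = f := by
  refine ⟨fun _ f hf => (P.extMk_eq_zero_iff f (i + 2) rfl hf i rfl).1 (Subsingleton.elim _ _),
    fun h => subsingleton_of_forall_eq 0 fun x => ?_⟩
  obtain ⟨f, hf, rfl⟩ := P.extMk_surjective x (i + 2) rfl
  exact (P.extMk_eq_zero_iff f (i + 2) rfl hf i rfl).2 (h f hf)

theorem isZero_derivedExt_iff_subsingleton_ext [EnoughProjectives C] [HasExt C] :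
    Limits.IsZero (((Ext A C i).obj (op X)).obj Y) ↔ Subsingleton (Abelian.Ext X Y i) := by
  let P := projectiveResolution X
  cases i with
  | zero =>
    rw [isZero_derivedExt_zero_iff A P, ← subsingleton_hom_iff_of_projectiveResolution,
      Abelian.Ext.addEquiv₀.toEquiv.subsingleton_congr]
  | succ i => rw [isZero_derivedExt_succ_iff A P, subsingleton_ext_succ_iff P]

end DerivedExt

section Depth

variable {K : Type} [Field K] {σ : Type} {I J : Ideal (MvPoly K σ)}

theorem natCast_le_depthQ_iff {i : ℕ} : (i : ℕ∞) ≤ depthQ K σ I ↔ ∀ j < i, Subsingleton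
    (Abelian.Ext (residueModule K σ) (ModuleCat.of _ (MvPoly K σ ⧸ I)) j) := by
  simp only [depthQ, ← not_subsingleton_iff_nontrivial, ← ModuleCat.isZero_iff_subsingleton,
    isZero_derivedExt_iff_subsingleton_ext, le_sInf_iff, Set.mem_ofPred_eq, forall_exists_index,
    and_imp]
  refine ⟨fun h j hj => ?_, fun h _ j hd hj => ?_⟩
  · by_contra hc
    exact hj.not_ge (by exact_mod_cast h j j rfl hc)
  · by_contra! hlt
    exact hj (h j (by rw [hd] at hlt; exact_mod_cast hlt))

theorem depthQ_le_of_rk_eq [Finite σ] {F : GradedFreeRes K σ I} (hF : F.IsMinimal)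
    (hfin : F.IsFinite) (F' : GradedFreeRes K σ J) (hrk : F'.rk = F.rk) :
    depthQ K σ I ≤ depthQ K σ J := by
  have := Fintype.ofFinite σ
  refine ENat.forall_natCast_le_iff_le.1 fun i hi => natCast_le_depthQ_iff.2 fun j hj => ?_
  refine F'.subsingleton_ext_syzygy_of_rk_eq_zero (k := 0)
    (fun _ => subsingleton_ext_residueModule_ring) fun k hk => ?_
  rw [hrk]
  exact hF.rk_eq_zero hfin (fun m hm => natCast_le_depthQ_iff.1 hi m (by lia)) hk

end Depth

/-! ### Minimal resolutions and regularity -/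

attribute [local instance] MvPolynomial.gradedAlgebra

section Comparison

variable {R : Type*} [CommRing R]

theorem exists_comp_eq_of_range_le {P M N : Type*} [AddCommGroup P] [Module R P] [AddCommGroup M]
    [Module R M] [AddCommGroup N] [Module R N] [Module.Projective R P] {f : P →ₗ[R] N}
    {g : M →ₗ[R] N} (h : LinearMap.range f ≤ LinearMap.range g) :
    ∃ φ : P →ₗ[R] M, g ∘ₗ φ = f := by
  obtain ⟨φ, hφ⟩ := Module.projective_lifting_property g.rangeRestrict
    (f.codRestrict (LinearMap.range g) fun x => h ⟨x, rfl⟩) g.surjective_rangeRestrict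
  exact ⟨φ, congrArg ((LinearMap.range g).subtype ∘ₗ ·) hφ⟩

theorem exists_nullHomotopy {X Y : ℕ → Type*} [∀ i, AddCommGroup (X i)] [∀ i, Module R (X i)]
    [∀ i, AddCommGroup (Y i)] [∀ i, Module R (Y i)] [∀ i, Module.Projective R (X i)]
    {dX : ∀ i, X (i + 1) →ₗ[R] X i} {dY : ∀ i, Y (i + 1) →ₗ[R] Y i}
    (hX : ∀ i x, dX i (dX (i + 1) x) = 0) (hY : ∀ i, Function.Exact (dY (i + 1)) (dY i))
    {θ : ∀ i, X i →ₗ[R] Y i} (hθ : ∀ i x, dY i (θ (i + 1) x) = θ i (dX i x))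
    (h₀ : LinearMap.range (θ 0) ≤ LinearMap.range (dY 0)) :
    ∃ h : ∀ i, X i →ₗ[R] Y (i + 1), θ 0 = dY 0 ∘ₗ h 0 ∧
      ∀ i, θ (i + 1) = dY (i + 1) ∘ₗ h (i + 1) + h i ∘ₗ dX i := by
  let S (i : ℕ) : Type _ := {h : X i →ₗ[R] Y (i + 1) // ∀ x, θ i (dX i x) = dY i (h (dX i x))}
  have step (i : ℕ) (s : S i) : ∃ h' : X (i + 1) →ₗ[R] Y (i + 2),
      dY (i + 1) ∘ₗ h' = θ (i + 1) - s.1 ∘ₗ dX i := by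
    refine exists_comp_eq_of_range_le ?_
    rintro _ ⟨x, rfl⟩
    exact (hY i _).1 (by simp [hθ, s.2])
  obtain ⟨g, hg⟩ := exists_comp_eq_of_range_le h₀
  let next (i : ℕ) (s : S i) : S (i + 1) :=
    ⟨(step i s).choose, fun x => by
      simpa [hX] using (LinearMap.congr_fun (step i s).choose_spec (dX (i + 1) x)).symm⟩
  let s (i : ℕ) : S i := Nat.rec ⟨g, fun x => (LinearMap.congr_fun hg _).symm⟩ next i
  exact ⟨fun i => (s i).1, hg.symm, fun i => sub_eq_iff_eq_add.1 (step i (s i)).choose_spec.symm⟩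

end Comparison

theorem apply_eq_sum_single {R M ι : Type*} [Semiring R] [AddCommMonoid M] [Module R M] [Fintype ι]
    [DecidableEq ι] (f : (ι → R) →ₗ[R] M) (v : ι → R) : f v = ∑ i, v i • f (Pi.single i 1) := by
  simpa only [map_sum, map_smul] using congrArg f (pi_eq_sum_univ' v)

section Degree

variable {K : Type} [Field K] {σ : Type}

theorem homogComp_iff {e : ℤ} {p : MvPoly K σ} :
    HomogComp K σ e p ↔ ∀ a, coeff a p ≠ 0 → (a.degree : ℤ) = e := by
  unfold HomogComp
  split_ifs with h
  · rw [mem_homogeneousSubmodule, IsHomogeneous, IsWeightedHomogeneous]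
    refine forall_congr' fun a => imp_congr_right fun _ => ?_
    rw [show Finsupp.weight 1 a = a.degree by rw [Finsupp.degree_eq_weight_one]; rfl]
    lia
  · refine ⟨by rintro rfl; simp, fun hp => ?_⟩
    ext a
    by_contra ha
    exact h (hp a ha ▸ Nat.cast_nonneg _)

theorem homogComp_monomial (a : σ →₀ ℕ) (c : K) : HomogComp K σ a.degree (monomial a c) := by
  classical
  refine homogComp_iff.2 fun x hx => ?_
  rw [coeff_monomial, ne_eq, ite_eq_right_iff, Classical.not_imp] at hx
  rw [hx.1]

/-- The homogeneous component of integer degree `e` of a polynomial; it is zero for `e < 0`. -/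
noncomputable def intHomogeneousComponent (e : ℤ) : MvPoly K σ →ₗ[K] MvPoly K σ :=
  if 0 ≤ e then homogeneousComponent e.toNat else 0

theorem coeff_intHomogeneousComponent (e : ℤ) (p : MvPoly K σ) (a : σ →₀ ℕ) :
    coeff a (intHomogeneousComponent e p) = if (a.degree : ℤ) = e then coeff a p else 0 := by
  unfold intHomogeneousComponent
  split_ifs with h h' h'
  · rw [coeff_homogeneousComponent, if_pos (by lia)]
  · rw [coeff_homogeneousComponent, if_neg (by lia)]
  · lia
  · simp

theorem homogComp_iff_intHomogeneousComponent_eq {e : ℤ} {p : MvPoly K σ} :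
    HomogComp K σ e p ↔ intHomogeneousComponent e p = p := by
  rw [homogComp_iff, MvPolynomial.ext_iff]
  refine forall_congr' fun a => ?_
  rw [coeff_intHomogeneousComponent, ite_eq_left_iff, eq_comm (a := (0 : K)), not_imp_comm]

theorem homogComp_intHomogeneousComponent (e : ℤ) (p : MvPoly K σ) :
    HomogComp K σ e (intHomogeneousComponent e p) :=
  homogComp_iff.2 fun a ha => by
    rw [coeff_intHomogeneousComponent] at ha
    exact of_not_not fun h => ha (if_neg h)

theorem HomogComp.intHomogeneousComponent_mul {d : ℤ} {q : MvPoly K σ} (hq : HomogComp K σ d q)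
    (e : ℤ) (p : MvPoly K σ) :
    intHomogeneousComponent e (p * q) = intHomogeneousComponent (e - d) p * q := by
  classical
  ext a
  rw [coeff_intHomogeneousComponent, coeff_mul, coeff_mul, ← Finset.sum_const_zero,
    ← Finset.sum_ite_irrel]
  refine Finset.sum_congr rfl fun x hx => ?_
  rw [coeff_intHomogeneousComponent, ite_zero_mul]
  by_cases hxq : coeff x.2 q = 0
  · simp [hxq]
  have hdeg : (a.degree : ℤ) = x.1.degree + d := by
    rw [← Finset.HasAntidiagonal.mem_antidiagonal.1 hx, map_add, Nat.cast_add,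
      homogComp_iff.1 hq _ hxq]
  exact if_congr (by lia) rfl rfl

theorem intHomogeneousComponent_mem {I : Ideal (MvPoly K σ)}
    (hI : I.IsHomogeneous (homogeneousSubmodule σ K)) {p : MvPoly K σ} (hp : p ∈ I) (e : ℤ) :
    intHomogeneousComponent e p ∈ I := by
  unfold intHomogeneousComponent
  split_ifs
  · exact homogeneousComponent_mem_of_mem hI hp _
  · exact I.zero_mem

variable {m : ℕ} {dg : Fin m → ℤ}

/-- The homogeneous component of degree `e` of a vector in the graded free module
`⊕_j R(-dg j)`. -/
noncomputable def homogVecComponent (dg : Fin m → ℤ) (e : ℤ) (v : Fin m → MvPoly K σ) :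
    Fin m → MvPoly K σ :=
  fun j => intHomogeneousComponent (e - dg j) (v j)

theorem isHomogVec_homogVecComponent (e : ℤ) (v : Fin m → MvPoly K σ) :
    IsHomogVec K σ dg e (homogVecComponent dg e v) :=
  fun _ => homogComp_intHomogeneousComponent _ _

theorem isHomogVec_iff_homogVecComponent_eq {e : ℤ} {v : Fin m → MvPoly K σ} :
    IsHomogVec K σ dg e v ↔ homogVecComponent dg e v = v :=
  (forall_congr' fun _ => homogComp_iff_intHomogeneousComponent_eq).trans funext_iff.symm

theorem isHomogVec_single (j : Fin m) :
    IsHomogVec K σ dg (dg j) (Pi.single j 1) := by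
  intro i
  obtain rfl | hij := eq_or_ne i j
  · rw [sub_self, Pi.single_eq_same]
    simpa using homogComp_monomial (0 : σ →₀ ℕ) (1 : K)
  · rw [Pi.single_eq_of_ne hij, homogComp_iff_intHomogeneousComponent_eq, map_zero]

theorem intHomogeneousComponent_apply {c : ℤ}
    {L : (Fin m → MvPoly K σ) →ₗ[MvPoly K σ] MvPoly K σ}
    (hL : ∀ j, HomogComp K σ (dg j - c) (L (Pi.single j 1))) (e : ℤ) (v : Fin m → MvPoly K σ) :
    intHomogeneousComponent (e - c) (L v) = L (homogVecComponent dg e v) := by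
  rw [apply_eq_sum_single L v, apply_eq_sum_single, map_sum]
  refine Finset.sum_congr rfl fun j _ => ?_
  rw [smul_eq_mul, (hL j).intHomogeneousComponent_mul, sub_sub_sub_cancel_right]
  rfl

variable {q : ℕ} {dg' : Fin q → ℤ}

/-- A linear map `⊕_j R(-dg j) → ⊕_j R(-dg' j)` preserves degrees if it maps homogeneous vectors
to homogeneous vectors of the same degree. -/
def PreservesDegree (dg : Fin m → ℤ) (dg' : Fin q → ℤ)
    (L : (Fin m → MvPoly K σ) →ₗ[MvPoly K σ] (Fin q → MvPoly K σ)) : Prop :=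
  ∀ e v, IsHomogVec K σ dg e v → IsHomogVec K σ dg' e (L v)

variable {L : (Fin m → MvPoly K σ) →ₗ[MvPoly K σ] (Fin q → MvPoly K σ)}

theorem PreservesDegree.homogVecComponent_apply (hL : PreservesDegree dg dg' L) (e : ℤ)
    (v : Fin m → MvPoly K σ) : homogVecComponent dg' e (L v) = L (homogVecComponent dg e v) :=
  _root_.funext fun i =>
    intHomogeneousComponent_apply (L := LinearMap.proj (φ := fun _ => MvPoly K σ) i ∘ₗ L)
      (fun j => hL _ _ (isHomogVec_single j) i) e v

theorem preservesDegree_iff_single :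
    PreservesDegree dg dg' L ↔ ∀ j, IsHomogVec K σ dg' (dg j) (L (Pi.single j 1)) := by
  refine ⟨fun hL j => hL _ _ (isHomogVec_single j), fun hL e v hv i => ?_⟩
  rw [homogComp_iff_intHomogeneousComponent_eq]
  refine (intHomogeneousComponent_apply (L := LinearMap.proj i ∘ₗ L)
    (fun j => hL j i) e v).trans ?_
  rw [isHomogVec_iff_homogVecComponent_eq.1 hv]
  rfl

theorem PreservesDegree.exists_isHomogVec (hL : PreservesDegree dg dg' L) {e : ℤ}
    {w : Fin q → MvPoly K σ} (hw : IsHomogVec K σ dg' e w) (h : w ∈ LinearMap.range L) :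
    ∃ v, IsHomogVec K σ dg e v ∧ L v = w := by
  obtain ⟨v, rfl⟩ := h
  refine ⟨homogVecComponent dg e v, isHomogVec_homogVecComponent e v, ?_⟩
  rw [← hL.homogVecComponent_apply, isHomogVec_iff_homogVecComponent_eq.1 hw]

theorem exists_preservesDegree_comp_eq {M : Type*} [AddCommGroup M] [Module (MvPoly K σ) M]
    {f : (Fin m → MvPoly K σ) →ₗ[MvPoly K σ] M} {g : (Fin q → MvPoly K σ) →ₗ[MvPoly K σ] M}
    (h : ∀ j, ∃ v, IsHomogVec K σ dg' (dg j) v ∧ g v = f (Pi.single j 1)) :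
    ∃ φ, PreservesDegree dg dg' φ ∧ g ∘ₗ φ = f := by
  choose y hy hgy using h
  let φ := (Pi.basisFun (MvPoly K σ) (Fin m)).constr (MvPoly K σ) y
  have hφ (j : Fin m) : φ (Pi.single j 1) = y j := by
    rw [← Pi.basisFun_apply, Module.Basis.constr_basis]
  refine ⟨φ, preservesDegree_iff_single.2 fun j => hφ j ▸ hy j,
    (Pi.basisFun (MvPoly K σ) (Fin m)).ext fun j => ?_⟩
  rw [Pi.basisFun_apply, LinearMap.comp_apply, hφ, hgy]

variable {I : Ideal (MvPoly K σ)}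

theorem mem_quotComp_iff {e : ℤ} {y : MvPoly K σ ⧸ I} :
    y ∈ QuotComp K σ I e ↔ ∃ p, HomogComp K σ e p ∧ Ideal.Quotient.mk I p = y := by
  unfold QuotComp HomogComp
  split_ifs
  · exact Submodule.mem_map
  · simp [eq_comm]

end Degree

namespace GradedFreeRes

variable {K : Type} [Field K] {σ : Type} {I : Ideal (MvPoly K σ)}

theorem exists_aug_eq_of_mem_quotComp (hI : I.IsHomogeneous (homogeneousSubmodule σ K))
    (G : GradedFreeRes K σ I) {e : ℤ} {y : MvPoly K σ ⧸ I} (hy : y ∈ QuotComp K σ I e) :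
    ∃ v, IsHomogVec K σ (G.dg 0) e v ∧ G.aug v = y := by
  have hr (j) : ∃ r, HomogComp K σ (G.dg 0 j - 0) r ∧
      Ideal.Quotient.mk I r = G.aug (Pi.single j 1) := by
    rw [sub_zero]
    exact mem_quotComp_iff.1 (G.aug_graded _ _ (isHomogVec_single j))
  choose r hr hra using hr
  let ρ := (Pi.basisFun (MvPoly K σ) (Fin (G.rk 0))).constr (MvPoly K σ) r
  have hρ (j) : ρ (Pi.single j 1) = r j := by
    rw [← Pi.basisFun_apply, Module.Basis.constr_basis]
  have hρaug (v) : Ideal.Quotient.mk I (ρ v) = G.aug v := by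
    rw [apply_eq_sum_single ρ, apply_eq_sum_single G.aug, map_sum]
    refine Finset.sum_congr rfl fun j _ => ?_
    rw [hρ, smul_eq_mul, map_mul, hra]
    rfl
  obtain ⟨p, hp, rfl⟩ := mem_quotComp_iff.1 hy
  obtain ⟨v, hv⟩ := G.aug_surj (Ideal.Quotient.mk I p)
  refine ⟨homogVecComponent (G.dg 0) e v, isHomogVec_homogVecComponent e v, ?_⟩
  rw [← hρaug, ← intHomogeneousComponent_apply (c := 0) (fun j => hρ j ▸ hr j), sub_zero,
    Ideal.Quotient.eq]
  have h := intHomogeneousComponent_mem hI (Ideal.Quotient.eq.1 ((hρaug v).trans hv)) e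
  rwa [map_sub, homogComp_iff_intHomogeneousComponent_eq.1 hp] at h

theorem exists_gradedChainMap (hI : I.IsHomogeneous (homogeneousSubmodule σ K))
    (F G : GradedFreeRes K σ I) :
    ∃ φ : ∀ i, (Fin (F.rk i) → MvPoly K σ) →ₗ[MvPoly K σ] (Fin (G.rk i) → MvPoly K σ),
      (∀ i, PreservesDegree (F.dg i) (G.dg i) (φ i)) ∧ G.aug ∘ₗ φ 0 = F.aug ∧
        ∀ i, G.dmap i ∘ₗ φ (i + 1) = φ i ∘ₗ F.dmap i := by
  let S (i : ℕ) : Type :=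
    {φ : (Fin (F.rk i) → MvPoly K σ) →ₗ[MvPoly K σ] (Fin (G.rk i) → MvPoly K σ) //
      PreservesDegree (F.dg i) (G.dg i) φ ∧
        LinearMap.range (φ ∘ₗ F.dmap i) ≤ LinearMap.range (G.dmap i)}
  have step (i : ℕ) (s : S i) : ∃ φ, PreservesDegree (F.dg (i + 1)) (G.dg (i + 1)) φ ∧
      G.dmap i ∘ₗ φ = s.1 ∘ₗ F.dmap i :=
    exists_preservesDegree_comp_eq fun j => PreservesDegree.exists_isHomogVec (G.graded i)
      (s.2.1 _ _ (F.graded i _ _ (isHomogVec_single j))) (s.2.2 ⟨_, rfl⟩)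
  obtain ⟨φ₀, hφ₀, hφ₀aug⟩ := exists_preservesDegree_comp_eq (dg := F.dg 0) (dg' := G.dg 0)
    fun j => G.exists_aug_eq_of_mem_quotComp hI (F.aug_graded _ _ (isHomogVec_single j))
  let next (i : ℕ) (s : S i) : S (i + 1) := ⟨(step i s).choose, (step i s).choose_spec.1, by
    rintro _ ⟨v, rfl⟩
    refine (G.exactS i _).1 ((LinearMap.congr_fun (step i s).choose_spec.2 _).trans ?_)
    rw [LinearMap.comp_apply, (F.exactS i).apply_apply_eq_zero, map_zero]⟩
  let s (i : ℕ) : S i := Nat.rec ⟨φ₀, hφ₀, by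
    rintro _ ⟨v, rfl⟩
    refine (G.exact0 _).1 ((LinearMap.congr_fun hφ₀aug _).trans ?_)
    exact F.exact0.apply_apply_eq_zero v⟩ next i
  exact ⟨fun i => (s i).1, fun i => (s i).2.1, hφ₀aug, fun i => (step i (s i)).choose_spec.2⟩

variable {F : GradedFreeRes K σ I}

theorem IsMinimal.constantCoeff_chainMap_apply (hF : F.IsMinimal)
    {θ : ∀ i, (Fin (F.rk i) → MvPoly K σ) →ₗ[MvPoly K σ] (Fin (F.rk i) → MvPoly K σ)}
    (hθaug : F.aug ∘ₗ θ 0 = 0) (hθ : ∀ i, F.dmap i ∘ₗ θ (i + 1) = θ i ∘ₗ F.dmap i) (i : ℕ)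
    (v : Fin (F.rk i) → MvPoly K σ) (j : Fin (F.rk i)) : constantCoeff (θ i v j) = 0 := by
  obtain ⟨h, hh₀, hh⟩ := exists_nullHomotopy (fun i x => (F.exactS i).apply_apply_eq_zero x)
    F.exactS (θ := θ) (fun i => LinearMap.congr_fun (hθ i)) (by
      rintro _ ⟨x, rfl⟩
      exact (F.exact0 (θ 0 x)).1 (LinearMap.congr_fun hθaug x))
  cases i with
  | zero => rw [hh₀]; exact hF _ _ _
  | succ i =>
    rw [hh, LinearMap.add_apply, Pi.add_apply, map_add, LinearMap.comp_apply, hF, zero_add,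
      LinearMap.comp_apply, apply_eq_sum_single, Finset.sum_apply, map_sum]
    exact Finset.sum_eq_zero fun s _ => by
      rw [Pi.smul_apply, smul_eq_mul, map_mul, hF, zero_mul]

-- The composite `F → G → F` of comparison maps is homotopic to the identity, so it is the identity
-- modulo the maximal ideal, and some entry of the degree preserving map `F → G` is a unit.
theorem IsMinimal.exists_dg_eq (hF : F.IsMinimal)
    (hI : I.IsHomogeneous (homogeneousSubmodule σ K)) (G : GradedFreeRes K σ I) (i : ℕ)
    (j : Fin (F.rk i)) : ∃ s, F.dg i j = G.dg i s := by
  obtain ⟨φ, hφ, hφaug, hφd⟩ := exists_gradedChainMap hI F G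
  obtain ⟨ψ, -, hψaug, hψd⟩ := exists_gradedChainMap hI G F
  have hone : constantCoeff (ψ i (φ i (Pi.single j 1)) j) = 1 := by
    have h := hF.constantCoeff_chainMap_apply (θ := fun i => ψ i ∘ₗ φ i - LinearMap.id)
      (by
        rw [LinearMap.comp_sub, ← LinearMap.comp_assoc, hψaug, hφaug, LinearMap.comp_id, sub_self])
      (fun i => by
        rw [LinearMap.comp_sub, ← LinearMap.comp_assoc, hψd, LinearMap.comp_assoc, hφd,
          LinearMap.sub_comp, LinearMap.comp_assoc, LinearMap.comp_id, LinearMap.id_comp])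
      i (Pi.single j 1) j
    simpa [sub_eq_zero] using h
  rw [apply_eq_sum_single, Finset.sum_apply, map_sum] at hone
  obtain ⟨s, -, hs⟩ := Finset.exists_ne_zero_of_sum_ne_zero (hone.trans_ne one_ne_zero)
  rw [Pi.smul_apply, smul_eq_mul, map_mul] at hs
  have hdeg := homogComp_iff.1 (hφ i _ _ (isHomogVec_single j) s) 0
    (constantCoeff_eq (σ := σ) (R := K) ▸ left_ne_zero_of_mul hs)
  rw [map_zero, Nat.cast_zero] at hdeg
  exact ⟨s, by lia⟩

theorem IsFinite.exists_resBound (hF : F.IsFinite) : ∃ r, ResBound K σ I r := by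
  obtain ⟨l, hl⟩ := hF
  obtain ⟨r, hr⟩ := (Set.finite_range fun x : Σ i : Fin l, Fin (F.rk i) =>
    F.dg x.1 x.2 - (x.1 : ℕ)).bddAbove
  refine ⟨r, F, fun i j => ?_⟩
  have hi : i < l := by
    by_contra! hi
    exact absurd (hl i hi ▸ j.pos) (lt_irrefl 0)
  exact hr ⟨⟨⟨i, hi⟩, j⟩, rfl⟩

theorem IsMinimal.resBound_iff (hF : F.IsMinimal)
    (hI : I.IsHomogeneous (homogeneousSubmodule σ K)) {r : ℤ} :
    ResBound K σ I r ↔ ∀ i j, F.dg i j - i ≤ r := by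
  refine ⟨fun ⟨G, hG⟩ i j => ?_, fun h => ⟨F, h⟩⟩
  obtain ⟨s, hs⟩ := hF.exists_dg_eq hI G i j
  exact hs ▸ hG i s

end GradedFreeRes

section Regularity

variable {K : Type} [Field K] {σ : Type} {I J : Ideal (MvPoly K σ)}

theorem CMreg_mono (hI : ∃ r, ResBound K σ I r) (hbdd : BddBelow {r | ResBound K σ I r})
    (h : ∀ r, ResBound K σ I r → ResBound K σ J r) : CMreg K σ J ≤ CMreg K σ I := by
  obtain ⟨b, hb⟩ := hbdd
  have hleast := Int.exists_least_of_bdd (P := ResBound K σ I) ⟨b, fun r hr => hb hr⟩ hI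
  unfold CMreg
  rw [dif_pos hleast]
  split_ifs with hJ
  · exact WithBot.coe_le_coe.2 (hJ.choose_spec.2 _ (h _ hleast.choose_spec.1))
  · exact bot_le

theorem CMreg_le_of_dg_le (hI : I.IsHomogeneous (homogeneousSubmodule σ K))
    {F : GradedFreeRes K σ I} (hF : F.IsMinimal) (hfin : F.IsFinite) (h0 : F.rk 0 ≠ 0)
    (F' : GradedFreeRes K σ J) (hdg : ∀ i j, ∃ s, F'.dg i j ≤ F.dg i s) :
    CMreg K σ J ≤ CMreg K σ I := by
  have hle {r : ℤ} (hr : ResBound K σ I r) := (hF.resBound_iff hI).1 hr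
  refine CMreg_mono hfin.exists_resBound ⟨F.dg 0 ⟨0, Nat.pos_of_ne_zero h0⟩ - 0, fun r hr =>
    hle hr 0 _⟩ fun r hr => ⟨F', fun i j => ?_⟩
  obtain ⟨s, hs⟩ := hdg i j
  exact (sub_le_sub_right hs _).trans (hle hr i s)

end Regularity

/-! ### Multigraded resolutions of monomial ideals -/

section Generators

section

variable {K α M : Type*} [Semiring K] [AddCommMonoid M] [Module K M]

theorem exists_finset_span_eq [SemilatticeInf α] [LocallyFiniteOrderBot α] [IsNoetherian K M]
    {V : α → Submodule K M} (hV : Monotone V) {m : α} (hm : ∀ a, V (a ⊓ m) = V a) :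
    ∃ G : Finset (α × M), (∀ x ∈ G, x.1 ≤ m) ∧
      ∀ a, Submodule.span K (Prod.snd '' {x ∈ (G : Set (α × M)) | x.1 ≤ a}) = V a := by
  classical
  have hfg (a : α) : (V a).FG := IsNoetherian.noetherian _
  choose S hS using hfg
  refine ⟨(Finset.Iic m).biUnion fun a => (S a).image (Prod.mk a), fun x hx => ?_,
    fun a => le_antisymm (Submodule.span_le.2 ?_) ?_⟩
  · obtain ⟨a, ha, hx⟩ := Finset.mem_biUnion.1 hx
    obtain ⟨v, -, rfl⟩ := Finset.mem_image.1 hx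
    exact Finset.mem_Iic.1 ha
  · rintro _ ⟨x, ⟨hx, hxa⟩, rfl⟩
    obtain ⟨a', -, hx⟩ := Finset.mem_biUnion.1 hx
    obtain ⟨v, hv, rfl⟩ := Finset.mem_image.1 hx
    exact hV hxa (hS a' ▸ Submodule.subset_span hv)
  · rw [← hm, ← hS]
    refine Submodule.span_mono fun v hv => ⟨(a ⊓ m, v), ⟨?_, inf_le_left⟩, rfl⟩
    exact Finset.mem_biUnion.2 ⟨a ⊓ m, Finset.mem_Iic.2 inf_le_right, Finset.mem_image_of_mem _ hv⟩

/-- A family `D` of elements in degrees `b` is a minimal system of generators of the family of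
subspaces `V`, thought of as the graded pieces of a multigraded module, if for every degree `a` the
members in degrees at most `a` span `V a`, and no member is redundant. -/
structure IsMinimalGenerators [LE α] (V : α → Submodule K M) {ι : Type*} (b : ι → α) (D : ι → M) :
    Prop where
  span_eq (a : α) : Submodule.span K (D '' {t | b t ≤ a}) = V a
  notMem (t : ι) : D t ∉ Submodule.span K (D '' {u | b u ≤ b t ∧ u ≠ t})

-- A minimal one among the finite generating sets has no redundant element.
theorem exists_finset_notMem_span [SemilatticeInf α] [LocallyFiniteOrderBot α]
    [IsNoetherian K M] {V : α → Submodule K M} (hV : Monotone V) {m : α}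
    (hm : ∀ a, V (a ⊓ m) = V a) :
    ∃ G : Finset (α × M), (∀ x ∈ G, x.1 ≤ m) ∧
      (∀ a, Submodule.span K (Prod.snd '' {x ∈ (G : Set (α × M)) | x.1 ≤ a}) = V a) ∧
      ∀ x ∈ G, x.2 ∉ Submodule.span K
        (Prod.snd '' {y ∈ (G : Set (α × M)) | y.1 ≤ x.1 ∧ y ≠ x}) := by
  classical
  obtain ⟨G, ⟨hGm, hG⟩, hmin⟩ := exists_minimal_of_wellFoundedLT _ (exists_finset_span_eq hV hm)
  refine ⟨G, hGm, hG, fun x hx hspan => ?_⟩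
  have hsep {s t : Set (α × M)} {p q : α × M → Prop} (h : ∀ y, y ∈ s ∧ p y → y ∈ t ∧ q y) :
      Submodule.span K (Prod.snd '' {y ∈ s | p y}) ≤ Submodule.span K (Prod.snd '' {y ∈ t | q y}) :=
    Submodule.span_mono (Set.image_mono h)
  have herase (a : α) :
      Submodule.span K (Prod.snd '' {y ∈ (G.erase x : Set (α × M)) | y.1 ≤ a}) = V a := by
    refine le_antisymm ((hsep fun y hy => ⟨Finset.mem_of_mem_erase hy.1, hy.2⟩).trans (hG a).le) ?_
    rw [← hG a, Submodule.span_le]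
    rintro _ ⟨y, ⟨hy, hya⟩, rfl⟩
    rcases eq_or_ne y x with rfl | hyx
    · exact hsep (fun z hz => ⟨Finset.mem_erase.2 ⟨hz.2.2, hz.1⟩, hz.2.1.trans hya⟩) hspan
    · exact Submodule.subset_span ⟨y, ⟨Finset.mem_erase.2 ⟨hyx, hy⟩, hya⟩, rfl⟩
  exact Finset.notMem_erase x G (hmin ⟨fun y hy => hGm y (Finset.mem_of_mem_erase hy), herase⟩
    (Finset.erase_subset x G) hx)

theorem IsMinimalGenerators.ne_zero [LE α] {V : α → Submodule K M} {ι : Type*} {b : ι → α}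
    {D : ι → M} (h : IsMinimalGenerators V b D) (t : ι) : D t ≠ 0 := fun h0 =>
  h.notMem t (h0 ▸ zero_mem _)

theorem exists_isMinimalGenerators [SemilatticeInf α] [LocallyFiniteOrderBot α]
    [IsNoetherian K M] {V : α → Submodule K M} (hV : Monotone V) {m : α}
    (hm : ∀ a, V (a ⊓ m) = V a) :
    ∃ (q : ℕ) (b : Fin q → α) (D : Fin q → M), (∀ t, b t ≤ m) ∧ IsMinimalGenerators V b D := by
  obtain ⟨G, hGm, hG, hmin⟩ := exists_finset_notMem_span hV hm
  let e (t : Fin G.card) : α × M := G.equivFin.symm t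
  have he : Function.Injective e := Subtype.val_injective.comp G.equivFin.symm.injective
  have hmem (t : Fin G.card) : e t ∈ G := (G.equivFin.symm t).2
  have himage (p : α × M → Prop) : (fun t => (e t).2) '' {t | p (e t)} =
      Prod.snd '' {x ∈ (G : Set (α × M)) | p x} := by
    refine Set.Subset.antisymm ?_ ?_
    · rintro _ ⟨t, ht, rfl⟩
      exact ⟨e t, ⟨hmem t, ht⟩, rfl⟩
    · rintro _ ⟨x, ⟨hxG, hpx⟩, rfl⟩
      have hx : e (G.equivFin ⟨x, hxG⟩) = x := by simp [e]
      exact ⟨G.equivFin ⟨x, hxG⟩, by rwa [Set.mem_ofPred_eq, hx], congrArg Prod.snd hx⟩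
  refine ⟨G.card, fun t => (e t).1, fun t => (e t).2, fun t => hGm _ (hmem t), fun a => ?_,
    fun t ht => hmin _ (hmem t) ?_⟩
  · exact (congrArg _ (himage fun x => x.1 ≤ a)).trans (hG a)
  · rw [← himage fun x => x.1 ≤ (e t).1 ∧ x ≠ e t]
    simpa only [he.ne_iff] using ht

end

section Relations

variable {K α M ι : Type*}

section

variable [Semiring K] [AddCommMonoid M] [Module K M]

/-- The vectors supported on the basis elements of degree at most `a`: the piece of degree `a` of
the free module on a basis with degrees `b`. -/
def supportedBelow (K : Type*) [Semiring K] [LE α] (b : ι → α) (a : α) : Submodule K (ι → K) :=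
  Submodule.pi {t | ¬ b t ≤ a} fun _ => ⊥

theorem mem_supportedBelow [LE α] {b : ι → α} {a : α} {c : ι → K} :
    c ∈ supportedBelow K b a ↔ ∀ t, c t ≠ 0 → b t ≤ a := by
  simp only [supportedBelow, Submodule.mem_pi, Set.mem_ofPred_eq, Submodule.mem_bot]
  exact forall_congr' fun t => not_imp_comm

variable [Fintype ι]

theorem span_image_eq_map_supportedBelow [LE α] (b : ι → α) (D : ι → M) (a : α) :
    Submodule.span K (D '' {t | b t ≤ a}) =
      (supportedBelow K b a).map (Fintype.linearCombination K D) := by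
  ext v
  simp only [Finsupp.mem_span_image_iff_linearCombination, Submodule.mem_map, mem_supportedBelow,
    Finsupp.mem_supported']
  refine (Finsupp.linearEquivFunOnFinite K K ι).toEquiv.exists_congr fun l => and_congr ?_ ?_
  · exact forall_congr' fun t => not_imp_comm
  · rw [← Finsupp.linearCombination_eq_fintype_linearCombination_apply]
    simp

/-- The relations of degree `a` among elements `D` of degrees `b`. -/
def relations [LE α] (b : ι → α) (D : ι → M) (a : α) : Submodule K (ι → K) :=
  supportedBelow K b a ⊓ LinearMap.ker (Fintype.linearCombination K D)

theorem relations_mono [Preorder α] (b : ι → α) (D : ι → M) :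
    Monotone (relations (K := K) b D) := fun _ _ h => inf_le_inf_right _ fun _ hc =>
  mem_supportedBelow.2 fun t ht => (mem_supportedBelow.1 hc t ht).trans h

theorem relations_inf [SemilatticeInf α] {b : ι → α} (D : ι → M) {m : α} (hb : ∀ t, b t ≤ m)
    (a : α) : relations (K := K) b D (a ⊓ m) = relations b D a := by
  simp only [relations, supportedBelow, le_inf_iff, hb, and_true]

end

-- A relation of degree `b t` with nonzero coefficient at `t` expresses `D t` by other generators.
theorem IsMinimalGenerators.lt_of_mem_relations [Field K] [AddCommGroup M] [Module K M] [Fintype ι]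
    [PartialOrder α] {V : α → Submodule K M} {b : ι → α} {D : ι → M}
    (h : IsMinimalGenerators V b D) {a : α} {c : ι → K} (hc : c ∈ relations b D a) {t : ι}
    (ht : c t ≠ 0) : b t < a := by
  classical
  obtain ⟨hsupp, hker⟩ := Submodule.mem_inf.1 hc
  rw [mem_supportedBelow] at hsupp
  refine (hsupp t ht).lt_of_ne fun hta => h.notMem t ?_
  rw [LinearMap.mem_ker, Fintype.linearCombination_apply,
    ← Finset.add_sum_erase _ _ (Finset.mem_univ t), add_eq_zero_iff_eq_neg] at hker
  rw [← Submodule.smul_mem_iff _ ht, hker]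
  refine neg_mem (Submodule.sum_mem _ fun u hu => ?_)
  by_cases hu0 : c u = 0
  · rw [hu0, zero_smul]
    exact zero_mem _
  · exact Submodule.smul_mem _ _ (Submodule.subset_span
      ⟨u, ⟨hta ▸ hsupp u hu0, Finset.ne_of_mem_erase hu⟩, rfl⟩)

end Relations

end Generators

section MultigradedRes

variable {K : Type} [Field K]

/-- A stage in the construction of a minimal multigraded resolution: the degrees of the basis of the
last free module constructed, and the graded pieces of the submodule of it to be resolved next. The
degrees are bounded by `m`, above which the pieces are constant, and the submodule is contained in
the maximal ideal times the free module. -/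
structure ResolutionStage (K : Type) [Field K] {α : Type*} [SemilatticeInf α] (m : α) where
  rk : ℕ
  mdeg : Fin rk → α
  piece : α → Submodule K (Fin rk → K)
  mdeg_le (s : Fin rk) : mdeg s ≤ m
  piece_mono : Monotone piece
  piece_inf (a : α) : piece (a ⊓ m) = piece a
  mdeg_lt {a : α} {c : Fin rk → K} : c ∈ piece a → ∀ s, c s ≠ 0 → mdeg s < a

namespace ResolutionStage

variable {α : Type*} [SemilatticeInf α] {m : α}

section

variable [LocallyFiniteOrderBot α]

theorem exists_next (S : ResolutionStage K m) :
    ∃ (T : ResolutionStage K m) (D : Fin T.rk → Fin S.rk → K),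
      (∀ a, Submodule.span K (D '' {t | T.mdeg t ≤ a}) = S.piece a) ∧ (∀ t, D t ≠ 0) ∧
        ∀ a, T.piece a = relations T.mdeg D a := by
  obtain ⟨q, b, D, hb, hD⟩ := exists_isMinimalGenerators S.piece_mono S.piece_inf
  exact ⟨⟨q, b, relations b D, hb, relations_mono b D, relations_inf D hb,
    fun hc _ hs => hD.lt_of_mem_relations hc hs⟩, D, hD.span_eq, hD.ne_zero, fun _ => rfl⟩

/-- The stage following `S`, with basis a minimal system of generators of the submodule of `S`. -/
noncomputable def next (S : ResolutionStage K m) : ResolutionStage K m := S.exists_next.choose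

/-- The matrix, with rows indexed by the new basis, of the differential from the stage following
`S` to `S`. -/
noncomputable def mat (S : ResolutionStage K m) : Fin S.next.rk → Fin S.rk → K :=
  S.exists_next.choose_spec.choose

theorem span_mat (S : ResolutionStage K m) (a : α) :
    Submodule.span K (S.mat '' {t | S.next.mdeg t ≤ a}) = S.piece a :=
  S.exists_next.choose_spec.choose_spec.1 a

theorem mat_ne_zero (S : ResolutionStage K m) (t : Fin S.next.rk) : S.mat t ≠ 0 :=
  S.exists_next.choose_spec.choose_spec.2.1 t

theorem piece_next (S : ResolutionStage K m) (a : α) :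
    S.next.piece a = relations S.next.mdeg S.mat a :=
  S.exists_next.choose_spec.choose_spec.2.2 a

theorem mdeg_lt_mdeg_next (S : ResolutionStage K m) {t : Fin S.next.rk} {s : Fin S.rk}
    (h : S.mat t s ≠ 0) : S.mdeg s < S.next.mdeg t :=
  S.mdeg_lt (S.span_mat _ ▸ Submodule.subset_span ⟨t, le_rfl, rfl⟩) s h

/-- The sequence of stages starting with `S`. -/
noncomputable def iterate (S : ResolutionStage K m) : ℕ → ResolutionStage K m
  | 0 => S
  | i + 1 => (S.iterate i).next

theorem le_card_Iio_mdeg_iterate (S : ResolutionStage K m) (i : ℕ) (s : Fin (S.iterate i).rk) :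
    i ≤ (Finset.Iio ((S.iterate i).mdeg s)).card := by
  induction i with
  | zero => exact Nat.zero_le _
  | succ i ih =>
    obtain ⟨r, hr⟩ := Function.ne_iff.1 ((S.iterate i).mat_ne_zero s)
    exact (ih r).trans_lt (Finset.card_lt_card (Finset.Iio_ssubset_Iio (mdeg_lt_mdeg_next _ hr)))

theorem exists_rk_iterate_eq_zero (S : ResolutionStage K m) :
    ∃ l, ∀ i, l ≤ i → (S.iterate i).rk = 0 := by
  refine ⟨(Finset.Iio m).card + 1, fun i hi => by_contra fun h => ?_⟩
  let s : Fin (S.iterate i).rk := ⟨0, Nat.pos_of_ne_zero h⟩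
  have hle := (S.le_card_Iio_mdeg_iterate i s).trans
    (Finset.card_le_card (Finset.Iio_subset_Iio ((S.iterate i).mdeg_le s)))
  lia

end

variable [OrderBot α] {A : Set α}

open Classical in
/-- The initial stage in the resolution of the quotient by the monomial ideal with set of
exponents `A`. -/
noncomputable def start (K : Type) [Field K] (hA : IsUpperSet A) (hm : ∀ a, a ⊓ m ∈ A ↔ a ∈ A)
    (hbot : ⊥ ∉ A) : ResolutionStage K m where
  rk := 1
  mdeg _ := ⊥
  piece a := if a ∈ A then ⊤ else ⊥
  mdeg_le _ := bot_le
  piece_mono a a' h := by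
    by_cases ha : a ∈ A
    · simp [hA h ha]
    · simp [ha]
  piece_inf a := by simp only [hm]
  mdeg_lt {a c} hc s hs := by
    refine bot_lt_iff_ne_bot.2 fun ha => hs ?_
    rw [ha, if_neg hbot, Submodule.mem_bot] at hc
    exact congrFun hc s

instance (hA : IsUpperSet A) (hm : ∀ a, a ⊓ m ∈ A ↔ a ∈ A) (hbot : ⊥ ∉ A) :
    Unique (Fin (start K hA hm hbot).rk) :=
  inferInstanceAs (Unique (Fin 1))

theorem mem_piece_start (hA : IsUpperSet A) (hm : ∀ a, a ⊓ m ∈ A ↔ a ∈ A)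
    (hbot : ⊥ ∉ A) {a : α} {c : Fin (start K hA hm hbot).rk → K} :
    c ∈ (start K hA hm hbot).piece a ↔ (c ≠ 0 → a ∈ A) := by
  by_cases ha : a ∈ A
  · simp only [start, ha, implies_true, iff_true]
    exact Submodule.mem_top
  · simp only [start, ha, imp_false, not_not]
    exact Submodule.mem_bot K

end ResolutionStage

/-- A multigraded free resolution of `R/I`, where `I` is the monomial ideal with set of exponents
`A`, encoded by scalars: the `i`-th module has a basis of multidegrees `mdeg i`, and the
differential sends the `t`-th basis element of the `(i + 1)`-st module to the vector with entries
`mat i t s • x ^ (mdeg (i + 1) t - mdeg i s)`. Exactness is expressed in each multidegree. -/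
structure MultigradedRes (K : Type) [Field K] {σ : Type} (A : Set (σ →₀ ℕ)) where
  rk : ℕ → ℕ
  mdeg (i : ℕ) : Fin (rk i) → σ →₀ ℕ
  mat (i : ℕ) : Fin (rk (i + 1)) → Fin (rk i) → K
  uniqueZero : Unique (Fin (rk 0))
  mdeg_zero (s : Fin (rk 0)) : mdeg 0 s = 0
  mdeg_le (i : ℕ) (t : Fin (rk (i + 1))) (s : Fin (rk i)) :
    mat i t s ≠ 0 → mdeg i s ≤ mdeg (i + 1) t
  mem_span_mat_zero (a : σ →₀ ℕ) (c : Fin (rk 0) → K) :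
    c ∈ Submodule.span K (mat 0 '' {t | mdeg 1 t ≤ a}) ↔ (c ≠ 0 → a ∈ A)
  span_mat_succ (i : ℕ) (a : σ →₀ ℕ) :
    Submodule.span K (mat (i + 1) '' {t | mdeg (i + 2) t ≤ a}) =
      relations (mdeg (i + 1)) (mat i) a

attribute [instance] MultigradedRes.uniqueZero

namespace MultigradedRes

variable {σ : Type} {A : Set (σ →₀ ℕ)}

/-- Lowering all multidegrees by `c`, truncated at zero, turns a resolution for `A` into one for
`{a | a + c ∈ A}`, because `b - c ≤ a ↔ b ≤ a + c`. -/
noncomputable def shift (L : MultigradedRes K A) (c : σ →₀ ℕ) :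
    MultigradedRes K {a | a + c ∈ A} where
  rk := L.rk
  mdeg i t := L.mdeg i t - c
  mat := L.mat
  uniqueZero := L.uniqueZero
  mdeg_zero s := by rw [L.mdeg_zero, zero_tsub]
  mdeg_le i t s h := tsub_le_tsub_right (L.mdeg_le i t s h) c
  mem_span_mat_zero a v := by
    simpa only [tsub_le_iff_right, Set.mem_ofPred_eq] using L.mem_span_mat_zero (a + c) v
  span_mat_succ i a := by
    simpa only [relations, supportedBelow, tsub_le_iff_right] using L.span_mat_succ i (a + c)

variable [DecidableEq σ] {m : σ →₀ ℕ}

/-- The minimal multigraded resolution obtained by iterating the choice of minimal generators. -/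
noncomputable def minimal (K : Type) [Field K] (hA : IsUpperSet A) (hm : ∀ a, a ⊓ m ∈ A ↔ a ∈ A)
    (h0 : 0 ∉ A) : MultigradedRes K A where
  rk i := ((ResolutionStage.start K hA hm h0).iterate i).rk
  mdeg i := ((ResolutionStage.start K hA hm h0).iterate i).mdeg
  mat i := ((ResolutionStage.start K hA hm h0).iterate i).mat
  uniqueZero := inferInstanceAs (Unique (Fin (ResolutionStage.start K hA hm h0).rk))
  mdeg_zero _ := rfl
  mdeg_le _ _ _ h := (ResolutionStage.mdeg_lt_mdeg_next _ h).le
  mem_span_mat_zero a c :=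
    (SetLike.ext_iff.1 (ResolutionStage.span_mat _ a) c).trans
      (ResolutionStage.mem_piece_start hA hm h0)
  span_mat_succ _ a := (ResolutionStage.span_mat _ a).trans (ResolutionStage.piece_next _ a)

theorem minimal_mdeg_lt (hA : IsUpperSet A) (hm : ∀ a, a ⊓ m ∈ A ↔ a ∈ A) (h0 : 0 ∉ A) {i : ℕ}
    {t : Fin ((minimal K hA hm h0).rk (i + 1))} {s : Fin ((minimal K hA hm h0).rk i)}
    (h : (minimal K hA hm h0).mat i t s ≠ 0) :
    (minimal K hA hm h0).mdeg i s < (minimal K hA hm h0).mdeg (i + 1) t :=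
  ResolutionStage.mdeg_lt_mdeg_next _ h

theorem exists_rk_minimal_eq_zero (hA : IsUpperSet A) (hm : ∀ a, a ⊓ m ∈ A ↔ a ∈ A) (h0 : 0 ∉ A) :
    ∃ l, ∀ i, l ≤ i → (minimal K hA hm h0).rk i = 0 :=
  ResolutionStage.exists_rk_iterate_eq_zero _

end MultigradedRes

end MultigradedRes

section Multigraded

variable {K σ ι κ : Type*} [CommSemiring K]

open Classical in
/-- The part of multidegree `a` of a vector in the free module with basis in multidegrees `b`,
given by its scalar coordinates. -/
noncomputable def multigradedCoeff (b : ι → σ →₀ ℕ) (a : σ →₀ ℕ) :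
    (ι → MvPolynomial σ K) →ₗ[K] (ι → K) :=
  LinearMap.pi fun s => if b s ≤ a then lcoeff K (a - b s) ∘ₗ LinearMap.proj s else 0

variable {b : ι → σ →₀ ℕ} {a : σ →₀ ℕ}

theorem multigradedCoeff_apply_of_le {s : ι} (h : b s ≤ a) (v : ι → MvPolynomial σ K) :
    multigradedCoeff b a v s = coeff (a - b s) (v s) := by
  simp [multigradedCoeff, h]

theorem multigradedCoeff_mem_supportedBelow (b : ι → σ →₀ ℕ) (a : σ →₀ ℕ)
    (v : ι → MvPolynomial σ K) : multigradedCoeff b a v ∈ supportedBelow K b a := by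
  refine mem_supportedBelow.2 fun s => not_imp_comm.1 fun h => ?_
  simp [multigradedCoeff, h]

theorem multigradedCoeff_add_apply (s : ι) (e : σ →₀ ℕ) (v : ι → MvPolynomial σ K) :
    multigradedCoeff b (e + b s) v s = coeff e (v s) := by
  rw [multigradedCoeff_apply_of_le le_add_self, add_tsub_cancel_right]

theorem eq_zero_iff_multigradedCoeff_eq_zero (b : ι → σ →₀ ℕ) (v : ι → MvPolynomial σ K) :
    v = 0 ↔ ∀ a, multigradedCoeff b a v = 0 := by
  refine ⟨fun h a => h ▸ map_zero _, fun h => ?_⟩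
  refine _root_.funext fun s => MvPolynomial.ext _ _ fun e => ?_
  rw [← multigradedCoeff_add_apply (b := b), h]
  rfl

theorem finite_multigradedCoeff_ne_zero [Finite ι] (b : ι → σ →₀ ℕ) (v : ι → MvPolynomial σ K) :
    {a | multigradedCoeff b a v ≠ 0}.Finite := by
  refine (Set.finite_iUnion fun s => (v s).support.finite_toSet.image (· + b s)).subset ?_
  intro a ha
  obtain ⟨s, hs⟩ := Function.ne_iff.1 ha
  have hle : b s ≤ a := mem_supportedBelow.1 (multigradedCoeff_mem_supportedBelow b a v) s hs
  rw [multigradedCoeff_apply_of_le hle] at hs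
  exact Set.mem_iUnion.2 ⟨s, a - b s, mem_support_iff.2 hs, tsub_add_cancel_of_le hle⟩

/-- The vector of multidegree `a` with scalar coordinates `c`, in the free module with basis in
multidegrees `b`. -/
noncomputable def multihomogVec (b : ι → σ →₀ ℕ) (a : σ →₀ ℕ) (c : ι → K) :
    ι → MvPolynomial σ K :=
  fun s => monomial (a - b s) (c s)

theorem sum_multihomogVec_multigradedCoeff {S : Finset (σ →₀ ℕ)} {v : ι → MvPolynomial σ K}
    (hS : {a | multigradedCoeff b a v ≠ 0} ⊆ S) :
    ∑ a ∈ S, multihomogVec b a (multigradedCoeff b a v) = v := by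
  classical
  ext s e
  simp only [Finset.sum_apply, coeff_sum, multihomogVec, coeff_monomial]
  rw [← multigradedCoeff_add_apply (b := b), Finset.sum_eq_single (e + b s)]
  · rw [if_pos (add_tsub_cancel_right e (b s))]
  · refine fun a _ hne => ite_eq_right_iff.2 fun hae => by_contra fun hs => hne ?_
    rw [← hae, tsub_add_cancel_of_le
      (mem_supportedBelow.1 (multigradedCoeff_mem_supportedBelow b a v) s hs)]
  · intro hnot
    have : multigradedCoeff b (e + b s) v = 0 := by_contra fun h => hnot (hS h)
    simp [this]

variable [Fintype κ] {b' : κ → σ →₀ ℕ} {D : κ → ι → K}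

/-- The multigraded map with scalar matrix `D` between the free modules with bases in multidegrees
`b'` and `b`. -/
noncomputable def monomialMap (b : ι → σ →₀ ℕ) (b' : κ → σ →₀ ℕ) (D : κ → ι → K) :
    (κ → MvPolynomial σ K) →ₗ[MvPolynomial σ K] (ι → MvPolynomial σ K) :=
  Fintype.linearCombination _ fun t => multihomogVec b (b' t) (D t)

theorem monomialMap_apply (v : κ → MvPolynomial σ K) (s : ι) :
    monomialMap b b' D v s = ∑ t, v t * monomial (b' t - b s) (D t s) := by
  simp [monomialMap, multihomogVec, Fintype.linearCombination_apply]

theorem monomialMap_multihomogVec (hD : ∀ t s, D t s ≠ 0 → b s ≤ b' t) {c : κ → K}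
    (hc : c ∈ supportedBelow K b' a) :
    monomialMap b b' D (multihomogVec b' a c) =
      multihomogVec b a (Fintype.linearCombination K D c) := by
  ext1 s
  simp only [monomialMap_apply, multihomogVec, monomial_mul, Fintype.linearCombination_apply,
    Finset.sum_apply, Pi.smul_apply, smul_eq_mul, map_sum]
  refine Finset.sum_congr rfl fun t _ => ?_
  by_cases hct : c t * D t s = 0
  · rw [hct, map_zero, map_zero]
  · rw [tsub_add_tsub_cancel (mem_supportedBelow.1 hc t (left_ne_zero_of_mul hct))
      (hD t s (right_ne_zero_of_mul hct))]

theorem multigradedCoeff_monomialMap (hD : ∀ t s, D t s ≠ 0 → b s ≤ b' t) (a : σ →₀ ℕ)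
    (v : κ → MvPolynomial σ K) :
    multigradedCoeff b a (monomialMap b b' D v) =
      Fintype.linearCombination K D (multigradedCoeff b' a v) := by
  have hv := mem_supportedBelow.1 (multigradedCoeff_mem_supportedBelow b' a v)
  ext1 s
  rw [Fintype.linearCombination_apply, Finset.sum_apply]
  by_cases h : b s ≤ a
  · rw [multigradedCoeff_apply_of_le h, monomialMap_apply, coeff_sum]
    refine Finset.sum_congr rfl fun t _ => ?_
    rw [Pi.smul_apply, smul_eq_mul, coeff_mul_monomial']
    by_cases hts : D t s = 0
    · simp [hts]
    by_cases hta : b' t ≤ a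
    · rw [if_pos (tsub_le_tsub_right hta _), multigradedCoeff_apply_of_le hta,
        tsub_tsub_tsub_cancel_right (hD t s hts)]
    · rw [if_neg (mt (tsub_le_tsub_iff_right h).1 hta), not_imp_comm.1 (hv t) hta, zero_mul]
  · rw [not_imp_comm.1 (mem_supportedBelow.1 (multigradedCoeff_mem_supportedBelow b a _) s) h]
    refine (Finset.sum_eq_zero fun t _ => by_contra fun hne => h ?_).symm
    exact (hD t s (right_ne_zero_of_mul hne)).trans (hv t (left_ne_zero_of_mul hne))

theorem mem_range_monomialMap_iff [Finite ι] (hD : ∀ t s, D t s ≠ 0 → b s ≤ b' t)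
    {v : ι → MvPolynomial σ K} :
    v ∈ LinearMap.range (monomialMap b b' D) ↔
      ∀ a, multigradedCoeff b a v ∈ Submodule.span K (D '' {t | b' t ≤ a}) := by
  simp only [span_image_eq_map_supportedBelow]
  constructor
  · rintro ⟨w, rfl⟩ a
    exact ⟨_, multigradedCoeff_mem_supportedBelow b' a w,
      (multigradedCoeff_monomialMap hD a w).symm⟩
  · intro h
    rw [← sum_multihomogVec_multigradedCoeff
      (finite_multigradedCoeff_ne_zero b v).coe_toFinset.ge]
    refine Submodule.sum_mem _ fun a _ => ?_
    obtain ⟨c, hc, hca⟩ := h a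
    exact ⟨multihomogVec b' a c, by rw [monomialMap_multihomogVec hD hc, hca]⟩

theorem constantCoeff_monomialMap (hD : ∀ t s, D t s ≠ 0 → b s < b' t) (v : κ → MvPolynomial σ K)
    (s : ι) : constantCoeff (monomialMap b b' D v s) = 0 := by
  classical
  rw [monomialMap_apply, map_sum]
  refine Finset.sum_eq_zero fun t _ => ?_
  rw [map_mul, constantCoeff_monomial, ite_eq_right_iff.2, mul_zero]
  exact fun h => by_contra fun hts => (hD t s hts).not_ge (tsub_eq_zero_iff_le.1 h)

theorem mem_restrictSupportIdeal_iff {A : Set (σ →₀ ℕ)} (hA : IsUpperSet A)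
    {p : MvPolynomial σ K} :
    p ∈ restrictSupportIdeal K A hA ↔ ∀ a, coeff a p ≠ 0 → a ∈ A :=
  (mem_restrictSupport_iff K).trans (forall_congr' fun _ => imp_congr_left mem_support_iff)

end Multigraded

section

variable {K : Type} [Field K] {σ : Type}

theorem preservesDegree_monomialMap {p q : ℕ} {b : Fin p → σ →₀ ℕ} {b' : Fin q → σ →₀ ℕ}
    {D : Fin q → Fin p → K} (hD : ∀ t s, D t s ≠ 0 → b s ≤ b' t) :
    PreservesDegree (fun t => ((b' t).degree : ℤ)) (fun s => ((b s).degree : ℤ))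
      (monomialMap b b' D) := by
  refine preservesDegree_iff_single.2 fun t s => ?_
  rw [monomialMap, Fintype.linearCombination_apply_single, one_smul, multihomogVec]
  by_cases hts : D t s = 0
  · exact homogComp_iff.2 fun a ha => absurd (by simp [hts]) ha
  · have hdeg : ((b' t).degree : ℤ) - (b s).degree = (b' t - b s).degree := by
      rw [← tsub_add_cancel_of_le (hD t s hts), map_add, add_tsub_cancel_right]
      push_cast
      ring
    exact hdeg ▸ homogComp_monomial _ _

namespace MultigradedRes

variable {A : Set (σ →₀ ℕ)}

/-- The graded free resolution of `R/I`, for `I` the monomial ideal with set of exponents `A`, given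
by a multigraded one. -/
noncomputable def toGradedFreeRes (L : MultigradedRes K A) (hA : IsUpperSet A) :
    GradedFreeRes K σ (restrictSupportIdeal K A hA) where
  rk := L.rk
  dg i j := (L.mdeg i j).degree
  dmap i := monomialMap (L.mdeg i) (L.mdeg (i + 1)) (L.mat i)
  aug := (restrictSupportIdeal K A hA).mkQ ∘ₗ LinearMap.proj default
  aug_surj := (Submodule.mkQ_surjective _).comp (LinearMap.proj_surjective _)
  exact0 v := by
    rw [← LinearMap.coe_range, SetLike.mem_coe, mem_range_monomialMap_iff (L.mdeg_le 0)]
    refine (Submodule.Quotient.mk_eq_zero _).trans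
      ((mem_restrictSupportIdeal_iff hA).trans (forall_congr' fun a => ?_))
    have hcoeff : multigradedCoeff (L.mdeg 0) a v default = coeff a (v default) := by
      rw [multigradedCoeff_apply_of_le (by simp [L.mdeg_zero]), L.mdeg_zero, tsub_zero]
    rw [L.mem_span_mat_zero, LinearMap.proj_apply, ← hcoeff]
    refine imp_congr_left (not_congr ?_)
    rw [_root_.funext_iff, Unique.forall_iff, Pi.zero_apply]
  exactS i v := by
    rw [← LinearMap.coe_range, SetLike.mem_coe, mem_range_monomialMap_iff (L.mdeg_le (i + 1)),
      eq_zero_iff_multigradedCoeff_eq_zero (L.mdeg i)]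
    refine forall_congr' fun a => ?_
    rw [L.span_mat_succ, multigradedCoeff_monomialMap (L.mdeg_le i), relations, Submodule.mem_inf,
      LinearMap.mem_ker, and_iff_right (multigradedCoeff_mem_supportedBelow _ _ _)]
  graded i := preservesDegree_monomialMap (L.mdeg_le i)
  aug_graded e v hv := by
    refine mem_quotComp_iff.2 ⟨v default, ?_, rfl⟩
    simpa [L.mdeg_zero] using hv default

theorem isMinimal_toGradedFreeRes {L : MultigradedRes K A} (hA : IsUpperSet A)
    (hL : ∀ i t s, L.mat i t s ≠ 0 → L.mdeg i s < L.mdeg (i + 1) t) :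
    (L.toGradedFreeRes hA).IsMinimal :=
  fun i v s => constantCoeff_monomialMap (hL i) v s

theorem isMinimal_toGradedFreeRes_minimal [DecidableEq σ] {m : σ →₀ ℕ} (hA : IsUpperSet A)
    (hm : ∀ a, a ⊓ m ∈ A ↔ a ∈ A) (h0 : 0 ∉ A) :
    ((minimal K hA hm h0).toGradedFreeRes hA).IsMinimal :=
  isMinimal_toGradedFreeRes hA fun _ _ _ => minimal_mdeg_lt hA hm h0

end MultigradedRes

end

section Colon

theorem isHomogeneous_restrictSupportIdeal {K σ : Type*} [CommSemiring K] {A : Set (σ →₀ ℕ)}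
    (hA : IsUpperSet A) :
    (restrictSupportIdeal K A hA).IsHomogeneous (homogeneousSubmodule σ K) := by
  classical
  intro e p hp
  rw [mem_restrictSupportIdeal_iff] at hp ⊢
  intro a ha
  rw [← DirectSum.Decomposition.decompose'_eq, decomposition.decompose'_apply,
    coeff_homogeneousComponent] at ha
  exact hp a (ite_ne_right_iff.1 ha).2

theorem isUpperSet_ofPred_add_mem {α : Type*} [AddCommMonoid α] [PartialOrder α]
    [IsOrderedAddMonoid α] {A : Set α} (hA : IsUpperSet A) (c : α) : IsUpperSet {a | a + c ∈ A} :=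
  hA.preimage fun _ _ h => add_le_add_left h c

theorem restrictSupportIdeal_ofPred_add_mem_of_zero_mem {K σ : Type*} [CommSemiring K]
    {A : Set (σ →₀ ℕ)} (hA : IsUpperSet A) (h0 : 0 ∈ A) (c : σ →₀ ℕ) :
    restrictSupportIdeal K {a | a + c ∈ A} (isUpperSet_ofPred_add_mem hA c) =
      restrictSupportIdeal K A hA := by
  have hmem (a : σ →₀ ℕ) : a ∈ A := hA zero_le h0
  ext p
  simp [mem_restrictSupportIdeal_iff, hmem]

variable {K : Type} [Field K] {σ : Type} {A : Set (σ →₀ ℕ)} {m : σ →₀ ℕ}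

theorem CMreg_restrictSupportIdeal_ofPred_add_mem_le (hA : IsUpperSet A)
    (hm : ∀ a, a ⊓ m ∈ A ↔ a ∈ A) (c : σ →₀ ℕ) :
    CMreg K σ (restrictSupportIdeal K {a | a + c ∈ A} (isUpperSet_ofPred_add_mem hA c)) ≤
      CMreg K σ (restrictSupportIdeal K A hA) := by
  classical
  by_cases h0 : (0 : σ →₀ ℕ) ∈ A
  · rw [restrictSupportIdeal_ofPred_add_mem_of_zero_mem hA h0]
  · let L := MultigradedRes.minimal K hA hm h0
    refine CMreg_le_of_dg_le (isHomogeneous_restrictSupportIdeal hA)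
      (MultigradedRes.isMinimal_toGradedFreeRes_minimal hA hm h0)
      (MultigradedRes.exists_rk_minimal_eq_zero hA hm h0) (Fin.pos (default : Fin (L.rk 0))).ne'
      ((L.shift c).toGradedFreeRes _) fun i j => ⟨j, ?_⟩
    exact Nat.cast_le.2 (Finsupp.degree_mono (tsub_le_self : L.mdeg i j - c ≤ L.mdeg i j))

theorem depthQ_restrictSupportIdeal_le_ofPred_add_mem [Finite σ] (hA : IsUpperSet A)
    (hm : ∀ a, a ⊓ m ∈ A ↔ a ∈ A) (c : σ →₀ ℕ) :
    depthQ K σ (restrictSupportIdeal K A hA) ≤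
      depthQ K σ (restrictSupportIdeal K {a | a + c ∈ A} (isUpperSet_ofPred_add_mem hA c)) := by
  classical
  by_cases h0 : (0 : σ →₀ ℕ) ∈ A
  · rw [restrictSupportIdeal_ofPred_add_mem_of_zero_mem hA h0]
  · exact depthQ_le_of_rk_eq (MultigradedRes.isMinimal_toGradedFreeRes_minimal hA hm h0)
      (MultigradedRes.exists_rk_minimal_eq_zero hA hm h0)
      (((MultigradedRes.minimal K hA hm h0).shift c).toGradedFreeRes _) rfl

end Colon

/-! ### Symbolic powers of the ideal of covers -/

section AssociatedPrimes

variable {R : Type*} [CommRing R]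

theorem associatedPrimes_quotient {M : Type*} [AddCommGroup M] [Module R M] (N : Submodule R M) :
    associatedPrimes R (M ⧸ N) = N.associatedPrimes := by
  have hcolon (x : M) : Submodule.colon (⊥ : Submodule R (M ⧸ N)) {N.mkQ x} = N.colon {x} := by
    ext r
    rw [Submodule.mem_colon_singleton, Submodule.mem_colon_singleton, ← map_smul,
      Submodule.mem_bot, Submodule.mkQ_apply, Submodule.Quotient.mk_eq_zero]
  ext p
  rw [AssociatedPrimes.mem_iff, IsAssociatedPrime, Submodule.isAssociatedPrime_def,
    N.mkQ_surjective.exists]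
  simp only [hcolon]
  exact Submodule.isAssociatedPrime_def.symm

theorem associatedPrimes_quotient_inf {s : Finset (Ideal R)} (hs : ∀ p ∈ s, p.IsPrime)
    (hanti : IsAntichain (· ≤ ·) (s : Set (Ideal R))) :
    associatedPrimes R (R ⧸ s.inf id) = s := by
  have hrad {p : Ideal R} (hp : p ∈ s) : (p.colon Set.univ).radical = p := by
    rw [Submodule.colon_univ, (hs p hp).radical]
  have hdec : Submodule.IsMinimalPrimaryDecomposition (s.inf id) s :=
    { inf_eq := rfl
      primary := fun p hp => (hs p hp).isPrimary
      distinct := fun p hp q hq hpq => by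
        change (p.colon Set.univ).radical ≠ (q.colon Set.univ).radical
        rwa [hrad hp, hrad hq]
      minimal := fun p hp hle => by
        obtain ⟨q, hq, hqp⟩ := (hs p hp).inf_le'.1 hle
        exact hanti (Finset.mem_of_mem_erase hq) hp (Finset.ne_of_mem_erase hq) hqp }
  rw [associatedPrimes_quotient, ← hdec.image_radical_eq_associated_primes]
  exact (Set.image_congr fun p hp => hrad hp).trans (Set.image_id _)

end AssociatedPrimes

section VariableIdeal

variable {R σ : Type*}

/-- The ideal of `R[X]` generated by the variables in `s`. -/
noncomputable def variableIdeal (R : Type*) {σ : Type*} [CommSemiring R] (s : Set σ) :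
    Ideal (MvPolynomial σ R) :=
  Ideal.span (X '' s)

theorem mem_variableIdeal [CommSemiring R] {s : Set σ} {p : MvPolynomial σ R} :
    p ∈ variableIdeal R s ↔ ∀ a, coeff a p ≠ 0 → ∃ i ∈ s, a i ≠ 0 :=
  mem_ideal_span_X_image.trans (forall_congr' fun _ => imp_congr_left mem_support_iff)

theorem X_mem_variableIdeal [CommSemiring R] {s : Set σ} {i : σ} (hi : i ∈ s) :
    (X i : MvPolynomial σ R) ∈ variableIdeal R s :=
  Ideal.subset_span ⟨i, hi, rfl⟩

theorem variableIdeal_le_variableIdeal_iff [CommSemiring R] [Nontrivial R] {s t : Set σ} :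
    variableIdeal R s ≤ variableIdeal R t ↔ s ⊆ t := by
  classical
  refine ⟨fun h i hi => ?_, fun h => Ideal.span_mono (Set.image_mono h)⟩
  obtain ⟨j, hj, hji⟩ := mem_variableIdeal.1 (h (X_mem_variableIdeal hi)) (Finsupp.single i 1)
    (by simp [coeff_X])
  exact (Finsupp.single_apply_ne_zero.1 hji).1 ▸ hj

theorem variableIdeal_eq_ker_killCompl [CommRing R] (s : Set σ) :
    variableIdeal R s =
      RingHom.ker (killCompl (R := R) (Subtype.val_injective (p := (· ∉ s)))) := by
  ext p
  rw [mem_variableIdeal, RingHom.mem_ker, MvPolynomial.ext_iff]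
  constructor
  · intro h b
    rw [coeff_killCompl, coeff_zero]
    by_contra hb
    obtain ⟨i, hi, hbi⟩ := h _ hb
    exact hbi (Finsupp.mapDomain_of_notMem_range _ _ (by simpa using hi))
  · intro h a ha
    by_contra! hs
    have hsupp : ↑a.support ⊆ Set.range (Subtype.val : {i // i ∉ s} → σ) :=
      fun i hi => ⟨⟨i, fun his => Finsupp.mem_support_iff.1 hi (hs i his)⟩, rfl⟩
    refine ha ?_
    rw [← a.mapDomain_comapDomain _ Subtype.val_injective hsupp,
      ← coeff_killCompl Subtype.val_injective, h, coeff_zero]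

theorem isPrime_variableIdeal [CommRing R] [IsDomain R] (s : Set σ) :
    (variableIdeal R s).IsPrime := by
  rw [variableIdeal_eq_ker_killCompl]
  exact RingHom.ker_isPrime _

theorem le_sum_of_mem_variableIdeal_pow [CommSemiring R] {e : Finset σ} {k : ℕ}
    {p : MvPolynomial σ R} (hp : p ∈ variableIdeal R (e : Set σ) ^ k) {a : σ →₀ ℕ}
    (ha : coeff a p ≠ 0) : k ≤ ∑ i ∈ e, a i := by
  classical
  induction k generalizing p a with
  | zero => exact Nat.zero_le _
  | succ k ih =>
    rw [pow_succ] at hp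
    induction hp using Submodule.mul_induction_on' generalizing a with
    | mem_mul_mem f hf g hg =>
      rw [coeff_mul] at ha
      obtain ⟨⟨b, c⟩, hbc, hne⟩ := Finset.exists_ne_zero_of_sum_ne_zero ha
      obtain ⟨i, hi, hci⟩ := mem_variableIdeal.1 hg c (right_ne_zero_of_mul hne)
      have hb : k ≤ ∑ j ∈ e, b j := ih hf (left_ne_zero_of_mul hne)
      have hc : 1 ≤ ∑ j ∈ e, c j :=
        (Nat.one_le_iff_ne_zero.2 hci).trans (Finset.single_le_sum_of_canonicallyOrdered hi)
      obtain rfl : b + c = a := Finset.HasAntidiagonal.mem_antidiagonal.1 hbc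
      simpa only [Finsupp.add_apply, Finset.sum_add_distrib] using add_le_add hb hc
    | add f _ g _ hf hg =>
      rw [coeff_add] at ha
      by_cases hfa : coeff a f = 0
      · exact hg (by rwa [hfa, zero_add] at ha)
      · exact hf hfa

theorem monomial_mem_variableIdeal_pow [CommSemiring R] {e : Finset σ} {k : ℕ} {a : σ →₀ ℕ}
    (ha : k ≤ ∑ i ∈ e, a i) (r : R) : monomial a r ∈ variableIdeal R (e : Set σ) ^ k := by
  classical
  have hprod : ∏ i ∈ e, (X i : MvPolynomial σ R) ^ a i ∈ variableIdeal R (e : Set σ) ^ k := by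
    refine Ideal.pow_le_pow_right ha ?_
    rw [← Finset.prod_pow_eq_pow_sum]
    exact Ideal.prod_mem_prod fun i hi => Ideal.pow_mem_pow (X_mem_variableIdeal hi) _
  rw [monomial_eq, Finsupp.prod_of_support_subset a (s := a.support ∪ e) Finset.subset_union_left _
    fun i _ => pow_zero _]
  exact Ideal.mul_mem_left _ _
    (Ideal.mem_of_dvd _ (Finset.prod_dvd_prod_of_subset _ _ _ Finset.subset_union_right) hprod)

theorem mem_variableIdeal_pow [CommSemiring R] {e : Finset σ} {k : ℕ} {p : MvPolynomial σ R} :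
    p ∈ variableIdeal R (e : Set σ) ^ k ↔ ∀ a, coeff a p ≠ 0 → k ≤ ∑ i ∈ e, a i := by
  refine ⟨fun hp a => le_sum_of_mem_variableIdeal_pow hp, fun h => ?_⟩
  rw [p.as_sum]
  exact Ideal.sum_mem _ fun a ha =>
    monomial_mem_variableIdeal_pow (h a (mem_support_iff.1 ha)) _

end VariableIdeal

theorem mem_span_prod_X_image {R σ : Type*} [CommSemiring R] {s : Set (Finset σ)}
    {p : MvPolynomial σ R} :
    p ∈ Ideal.span ((fun d : Finset σ => ∏ i ∈ d, (X i : MvPolynomial σ R)) '' s) ↔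
      ∀ a, coeff a p ≠ 0 → ∃ d ∈ s, d ⊆ a.support := by
  classical
  have himage : (fun d : Finset σ => ∏ i ∈ d, (X i : MvPolynomial σ R)) '' s =
      (fun b => monomial b 1) '' ((fun d : Finset σ => ∑ i ∈ d, Finsupp.single i 1) '' s) := by
    simp only [Set.image_image, monomial_sum_one]
    rfl
  have hle (d : Finset σ) (a : σ →₀ ℕ) :
      ∑ i ∈ d, Finsupp.single i 1 ≤ a ↔ d ⊆ a.support := by
    simp only [Finsupp.le_def, Finsupp.finsetSum_apply, Finsupp.single_apply, Finset.sum_ite_eq',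
      Finset.subset_iff, Finsupp.mem_support_iff, ← Nat.one_le_iff_ne_zero]
    refine forall_congr' fun i => ?_
    split_ifs with hi <;> simp [hi]
  rw [himage, mem_ideal_span_monomial_image]
  simp only [Set.exists_mem_image, hle, mem_support_iff]

namespace Clutter

variable {n : ℕ} (C : Clutter n)

theorem exists_isMinCover_subset {c : Finset (Fin n)} (hc : C.IsCover c) :
    ∃ d ⊆ c, C.IsMinCover d := by
  obtain ⟨d, hdc, hd⟩ := exists_minimal_le_of_wellFoundedLT C.IsCover c hc
  exact ⟨d, hdc, hd.prop, fun b hbd hb => hd.eq_of_le hb hbd⟩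

theorem mem_edges_dual {d : Finset (Fin n)} : d ∈ C.dual.edges ↔ C.IsMinCover d := by
  classical
  rw [dual, Finset.mem_filter_univ]

theorem mem_coverIdeal {K : Type} [Field K] {p : MvPolynomial (Fin n) K} :
    p ∈ C.coverIdeal K ↔ ∀ a, coeff a p ≠ 0 → C.IsCover a.support := by
  rw [coverIdeal, edgeIdeal, mem_span_prod_X_image]
  refine forall₂_congr fun a _ => ⟨?_, fun h => ?_⟩
  · rintro ⟨d, hd, hda⟩ e he
    obtain ⟨i, hie, hid⟩ := (C.mem_edges_dual.1 hd).1 e he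
    exact ⟨i, hie, hda hid⟩
  · obtain ⟨d, hda, hd⟩ := C.exists_isMinCover_subset h
    exact ⟨d, C.mem_edges_dual.2 hd, hda⟩

theorem coverIdeal_eq_inf (K : Type) [Field K] :
    C.coverIdeal K =
      (C.edges.image fun e : Finset (Fin n) => variableIdeal K (e : Set (Fin n))).inf id := by
  ext p
  rw [mem_coverIdeal, Finset.inf_image, Submodule.mem_finsetInf]
  simp only [Function.comp_apply, id, mem_variableIdeal, IsCover, Finsupp.mem_support_iff]
  exact ⟨fun h e he a ha => h a ha e he, fun h a ha e he => h e he a ha⟩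

theorem associatedPrimes_coverIdeal (K : Type) [Field K] :
    associatedPrimes (MvPolynomial (Fin n) K) (MvPolynomial (Fin n) K ⧸ C.coverIdeal K) =
      (fun e : Finset (Fin n) => variableIdeal K (e : Set (Fin n))) '' C.edges := by
  classical
  rw [coverIdeal_eq_inf, associatedPrimes_quotient_inf, Finset.coe_image]
  · simp only [Finset.forall_mem_image]
    exact fun e _ => isPrime_variableIdeal _
  · rw [Finset.coe_image]
    rintro _ ⟨e, he, rfl⟩ _ ⟨f, hf, rfl⟩ hne hle
    rw [variableIdeal_le_variableIdeal_iff, Finset.coe_subset] at hle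
    exact hne (by rw [C.antichain e he f hf hle])

/-- The exponents of the monomials in the `k`-th symbolic power of the ideal of covers. -/
def symbExp (k : ℕ) : Set (Fin n →₀ ℕ) :=
  {a | ∀ e ∈ C.edges, k ≤ ∑ i ∈ e, a i}

variable {C}

theorem isUpperSet_symbExp {k : ℕ} : IsUpperSet (C.symbExp k) :=
  fun _ _ hab ha e he => (ha e he).trans (Finset.sum_le_sum fun i _ => hab i)

theorem inf_mem_symbExp_iff {k : ℕ} (a : Fin n →₀ ℕ) :
    a ⊓ Finsupp.equivFunOnFinite.symm (fun _ => k) ∈ C.symbExp k ↔ a ∈ C.symbExp k := by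
  refine ⟨fun h => isUpperSet_symbExp inf_le_left h, fun h e he => ?_⟩
  by_cases hbig : ∃ i ∈ e, k ≤ a i
  · obtain ⟨i, hi, hki⟩ := hbig
    exact le_trans (by simp [hki]) (Finset.single_le_sum_of_canonicallyOrdered hi)
  · push Not at hbig
    exact (h e he).trans (Finset.sum_le_sum fun i hi => by simp [(hbig i hi).le])

theorem symbPow_coverIdeal (K : Type) [Field K] (k : ℕ) :
    symbPow K (C.coverIdeal K) k = restrictSupportIdeal K (C.symbExp k) isUpperSet_symbExp := by
  ext p
  rw [symbPow, associatedPrimes_coverIdeal, iInf_image, mem_restrictSupportIdeal_iff]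
  simp only [Submodule.mem_iInf, mem_variableIdeal_pow]
  exact ⟨fun h a ha e he => h e he a ha, fun h e he a ha => h a ha e he⟩

end Clutter

/-! ### Exact covers -/

namespace Clutter

variable {n : ℕ} {C : Clutter n}

/-- The fractional exact covers of `C`: weights on the vertices, supported on the vertices that lie
in some edge, under which every edge has total weight `1`. They form a compact face of the set
covering polyhedron of `C`. -/
def exactCoverFace (C : Clutter n) : Set (Fin n → ℝ) :=
  {x | (∀ i, 0 ≤ x i) ∧ (∀ e ∈ C.edges, ∑ i ∈ e, x i = 1) ∧
    ∀ i, (∀ e ∈ C.edges, i ∉ e) → x i = 0}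

theorem Uniform.exactCoverFace_nonempty (hunif : C.Uniform) (hne : ∅ ∉ C.edges) :
    C.exactCoverFace.Nonempty := by
  classical
  -- The edges have a common size `d`; the vertices in some edge get the weight `1 / d`.
  refine ⟨fun i => if h : ∃ e ∈ C.edges, i ∈ e then (h.choose.card : ℝ)⁻¹ else 0,
    fun i => by dsimp only; split_ifs <;> positivity, fun e he => ?_,
    fun i hi => dif_neg fun ⟨e, he, hie⟩ => hi e he hie⟩
  have hcard : (e.card : ℝ) ≠ 0 :=
    Nat.cast_ne_zero.2 (Finset.card_ne_zero.2 (Finset.nonempty_iff_ne_empty.2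
      (ne_of_mem_of_not_mem he hne)))
  have hweight (i : Fin n) (hi : i ∈ e) :
      (if h : ∃ f ∈ C.edges, i ∈ f then (h.choose.card : ℝ)⁻¹ else 0) = (e.card : ℝ)⁻¹ := by
    have h : ∃ f ∈ C.edges, i ∈ f := ⟨e, he, hi⟩
    rw [dif_pos h, hunif _ h.choose_spec.1 e he]
  rw [Finset.sum_congr rfl hweight, Finset.sum_const, nsmul_eq_mul, mul_inv_cancel₀ hcard]

theorem isClosed_exactCoverFace : IsClosed C.exactCoverFace := by
  simp only [exactCoverFace, Set.ofPred_and, Set.ofPred_forall]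
  refine .inter (isClosed_iInter fun i => ?_) (.inter
    (isClosed_iInter fun e => isClosed_iInter fun _ => ?_)
    (isClosed_iInter fun i => isClosed_iInter fun _ => ?_))
  · exact isClosed_le continuous_const (continuous_apply i)
  · exact isClosed_eq (by fun_prop) continuous_const
  · exact isClosed_eq (continuous_apply i) continuous_const

theorem exactCoverFace_subset_Icc : C.exactCoverFace ⊆ Set.Icc 0 1 := by
  refine fun x ⟨hnonneg, hedge, hsupp⟩ => ⟨hnonneg, fun i => ?_⟩
  by_cases h : ∃ e ∈ C.edges, i ∈ e
  · obtain ⟨e, he, hi⟩ := h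
    exact (Finset.single_le_sum (fun j _ => hnonneg j) hi).trans_eq (hedge e he)
  · push Not at h
    exact (hsupp i h).trans_le zero_le_one

theorem isCompact_exactCoverFace : IsCompact C.exactCoverFace :=
  isCompact_Icc.of_isClosed_subset isClosed_exactCoverFace exactCoverFace_subset_Icc

theorem isExtreme_exactCoverFace : IsExtreme ℝ C.coverPolyhedron C.exactCoverFace := by
  refine ⟨fun x hx => ⟨hx.1, fun e he => (hx.2.1 e he).ge⟩, ?_⟩
  rintro x hx y hy _ ⟨-, hedge, hsupp⟩ ⟨s, t, hs, ht, hst, rfl⟩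
  simp only [Pi.add_apply, Pi.smul_apply, smul_eq_mul, Finset.sum_add_distrib,
    ← Finset.mul_sum] at hedge hsupp
  refine ⟨hx.1, fun e he => ?_, fun i hi => ?_⟩
  · nlinarith [hedge e he, hx.2 e he, hy.2 e he]
  · have hsx : s * x i = 0 :=
      ((add_eq_zero_iff_of_nonneg (mul_nonneg hs.le (hx.1 i)) (mul_nonneg ht.le (hy.1 i))).1
        (hsupp i hi)).1
    exact (mul_eq_zero.1 hsx).resolve_left hs.ne'

theorem IntegralPolyhedron.exists_sum_eq_one (hint : C.IntegralPolyhedron)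
    (hface : C.exactCoverFace.Nonempty) :
    ∃ c : Fin n →₀ ℕ, ∀ e ∈ C.edges, ∑ i ∈ e, c i = 1 := by
  obtain ⟨x, hx⟩ := isCompact_exactCoverFace.extremePoints_nonempty hface
  obtain ⟨hnonneg, hedge, -⟩ := extremePoints_subset hx
  choose z hz using hint x (isExtreme_exactCoverFace.extremePoints_subset_extremePoints hx)
  have hnat (i : Fin n) : x i = (z i).toNat := by
    have hzi : 0 ≤ z i := Int.cast_nonneg_iff.1 (hz i ▸ hnonneg i)
    rw [hz, ← Int.cast_natCast, Int.toNat_of_nonneg hzi]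
  refine ⟨Finsupp.equivFunOnFinite.symm fun i => (z i).toNat, fun e he => ?_⟩
  have hsum := hedge e he
  simp only [hnat] at hsum
  exact_mod_cast hsum

theorem ofPred_add_mem_symbExp {c : Fin n →₀ ℕ} {k l : ℕ} (hc : ∀ e ∈ C.edges, ∑ i ∈ e, c i = l) :
    {a | a + c ∈ C.symbExp (k + l)} = C.symbExp k := by
  ext a
  refine forall₂_congr fun e he => ?_
  simp only [Finsupp.add_apply, Finset.sum_add_distrib, hc e he, add_le_add_iff_right]

theorem symbExp_eq_empty {k : ℕ} (hk : k ≠ 0) (hC : ∅ ∈ C.edges) : C.symbExp k = ∅ :=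
  Set.eq_empty_of_forall_notMem fun _ ha => hk (Nat.le_zero.1 (ha ∅ hC))

theorem exists_ofPred_add_mem_symbExp (hunif : C.Uniform) (hint : C.IntegralPolyhedron) {k : ℕ}
    (hk : k ≠ 0) :
    ∃ c, {a | a + c ∈ C.symbExp (k + 1)} = C.symbExp k := by
  by_cases hC : ∅ ∈ C.edges
  · refine ⟨0, ?_⟩
    simp only [symbExp_eq_empty hk hC, symbExp_eq_empty k.succ_ne_zero hC, Set.mem_empty_iff_false,
      Set.ofPred_false]
  · obtain ⟨c, hc⟩ := hint.exists_sum_eq_one (hunif.exactCoverFace_nonempty hC)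
    exact ⟨c, ofPred_add_mem_symbExp hc⟩

end Clutter

/-- the symbolic powers of the ideal of covers of a uniform clutter
with integral set covering polyhedron have non-increasing depth and non-decreasing
regularity. -/
theorem stmt14 (K : Type) [Field K] (n : ℕ) (C : Clutter n)
    (hunif : C.Uniform) (hint : C.IntegralPolyhedron) :
    ∀ k : ℕ, 1 ≤ k →
      depthQ K (Fin n) (symbPow K (Clutter.coverIdeal K C) k) ≥
        depthQ K (Fin n) (symbPow K (Clutter.coverIdeal K C) (k + 1)) ∧
      CMreg K (Fin n) (symbPow K (Clutter.coverIdeal K C) k) ≤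
        CMreg K (Fin n) (symbPow K (Clutter.coverIdeal K C) (k + 1)) := by
  intro k hk
  obtain ⟨c, hc⟩ := Clutter.exists_ofPred_add_mem_symbExp hunif hint (Nat.one_le_iff_ne_zero.1 hk)
  have hA : IsUpperSet (C.symbExp (k + 1)) := Clutter.isUpperSet_symbExp
  simp only [Clutter.symbPow_coverIdeal, ← hc]
  exact ⟨depthQ_restrictSupportIdeal_le_ofPred_add_mem hA Clutter.inf_mem_symbExp_iff c,
    CMreg_restrictSupportIdeal_ofPred_add_mem_le hA Clutter.inf_mem_symbExp_iff c⟩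
end

section
/- Let G be a bipartite graph with vertices x_1,…,x_n and edge ideal I(G) ⊆ R, and let k ≥ 1 and 1 ≤ i ≤ n be integers. Then: (a) (I(G) : x_i)^k = (I(G) : x_i)^{(k)}; (b) (I(G)^k : x_i^k) = (I(G) : x_i)^k. -/
open MvPolynomial CategoryTheory Opposite

noncomputable section

variable (K : Type) [Field K] (σ : Type)

variable {n : ℕ}

/-- The edge ideal of a graph, generated by the monomials `x_i x_j` for edges `{x_i, x_j}`. -/
def edgeIdealG (K : Type) [Field K] {n : ℕ} (G : SimpleGraph (Fin n)) :
    Ideal (MvPoly K (Fin n)) :=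
  Ideal.span { p | ∃ a b, G.Adj a b ∧ p = MvPolynomial.X a * MvPolynomial.X b }

/-- The edge ideal of the induced subgraph of `G` obtained by deleting the vertices in `s`. -/
def edgeIdealDel (K : Type) [Field K] {n : ℕ} (G : SimpleGraph (Fin n)) (s : Set (Fin n)) :
    Ideal (MvPoly K (Fin n)) :=
  Ideal.span { p | ∃ a b, G.Adj a b ∧ a ∉ s ∧ b ∉ s ∧
    p = MvPolynomial.X a * MvPolynomial.X b }

/-- The ideal generated by the variables corresponding to the neighbours of `x_i`. -/
def nbIdeal (K : Type) [Field K] {n : ℕ} (G : SimpleGraph (Fin n)) (i : Fin n) :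
    Ideal (MvPoly K (Fin n)) :=
  Ideal.span (MvPolynomial.X '' (G.neighborSet i))

end

/-!
Write `I` for the edge ideal and `J = (I : x_i)`. Membership in a power of `I` can be tested
monomial by monomial. Setting `x_i = 1` maps `I` into `J`, so `x^m x_i^k ∈ I^k` forces `x^m ∈ J^k`;
this gives `(I^k : x_i^k) ⊆ J^k`, and the reverse inclusion is immediate.

For the symbolic powers, let `x^m` be a monomial of some `f ∈ J^{(k)}`. A vertex cover `C` that
avoids `x_i` yields a prime `(x_v : v ∈ C)` containing `J`, so `x^m` has degree at least `k` in the
variables of `C`. A vertex cover through `x_i` already carries the degree `k` of `x_i^k`. Hence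
every vertex cover has weight at least `k` with respect to the exponents of `x^m x_i^k`, and the
weighted form of König's theorem factors `k` edges out of `x^m x_i^k`. Thus
`J^{(k)} ⊆ (I^k : x_i^k) = J^k`.
-/

section Matching

open Finset

theorem exists_embedding_mem_of_card_add_le_card_biUnion_add {ι α : Type*} [Fintype ι]
    [DecidableEq α] (t : ι → Finset α) {k : ℕ}
    (h : ∀ s : Finset ι, #s + k ≤ #(s.biUnion t) + Fintype.card ι) :
    ∃ (a : Fin k ↪ ι) (b : Fin k ↪ α), ∀ j, b j ∈ t (a j) := by
  have hk : k ≤ Fintype.card ι := by simpa using h ∅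
  -- Dummy elements lying in every set absorb the defect, so that Hall's theorem applies.
  let d := Fintype.card ι - k
  obtain ⟨f, hf, hft⟩ := (all_card_le_biUnion_card_iff_exists_injective
      fun x ↦ (t x).disjSum (univ : Finset (Fin d))).1 fun s ↦ by
    obtain rfl | ⟨x₀, hx₀⟩ := s.eq_empty_or_nonempty
    · simp
    have hunion : s.biUnion (fun x ↦ (t x).disjSum (univ : Finset (Fin d))) =
        (s.biUnion t).disjSum univ := by
      ext (y | y)
      · simp
      · simpa using ⟨x₀, hx₀⟩
    rw [hunion, card_disjSum, card_univ, Fintype.card_fin]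
    have := h s
    lia
  have hright : Fintype.card {x // ¬ (f x).isLeft} ≤ d := by
    let g (x : {x // ¬ (f x).isLeft}) : Fin d := (f x).getRight (Sum.not_isLeft.1 x.2)
    have hg : Function.Injective g := fun x y hxy ↦
      Subtype.ext (hf (by simpa [g] using congrArg (Sum.inr (α := α)) hxy))
    simpa using Fintype.card_le_of_injective g hg
  have hleft : Fintype.card (Fin k) ≤ Fintype.card {x // (f x).isLeft} := by
    have := Fintype.card_subtype_compl fun x ↦ ((f x).isLeft : Prop)
    rw [Fintype.card_fin]
    lia
  obtain ⟨e⟩ := Function.Embedding.nonempty_of_card_le hleft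
  have hb (j) : Sum.inl ((f (e j)).getLeft (e j).2) = f (e j) := Sum.inl_getLeft _ _
  refine ⟨e.trans (.subtype _), ⟨fun j ↦ (f (e j)).getLeft (e j).2, fun j j' hjj' ↦ ?_⟩,
    fun j ↦ ?_⟩
  · exact e.injective (Subtype.ext (hf
      ((hb j).symm.trans ((congrArg Sum.inl hjj').trans (hb j')))))
  · have := hft (e j)
    rwa [← hb, inl_mem_disjSum] at this

/-- König's theorem: a matching of size `k` is given by its edges `a j, b j`. -/
theorem exists_matching_of_le_card_vertexCover {V : Type*} [Finite V] {G : SimpleGraph V}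
    (hG : G.IsBipartite) {k : ℕ} (hk : ∀ C : Finset V, G.IsVertexCover C → k ≤ #C) :
    ∃ a b : Fin k → V, (∀ j, G.Adj (a j) (b j)) ∧ Function.Injective (Sum.elim a b) := by
  classical
  have := Fintype.ofFinite V
  obtain ⟨c⟩ := hG
  let L := {v // c v = 0}
  let N (x : L) : Finset V := {v | G.Adj x v}
  have hall (s : Finset L) : #s + k ≤ #(s.biUnion N) + Fintype.card L := by
    have hcover : G.IsVertexCover (sᶜ.map (.subtype _) ∪ s.biUnion N : Finset V) := by
      have hmem {v w} (hvw : G.Adj v w) (hv : c v = 0) :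
          v ∈ sᶜ.map (.subtype _) ∪ s.biUnion N ∨ w ∈ sᶜ.map (.subtype _) ∪ s.biUnion N := by
        by_cases hvs : (⟨v, hv⟩ : L) ∈ s
        · exact .inr (mem_union_right _ (mem_biUnion.2 ⟨_, hvs, by simpa [N] using hvw⟩))
        · exact .inl (mem_union_left _ (by simpa [L, hv] using hvs))
      intro v w hvw
      have hc := c.valid hvw
      obtain hv | hw : c v = 0 ∨ c w = 0 := by lia
      · exact hmem hvw hv
      · exact (hmem hvw.symm hw).symm
    have hcard := (hk _ hcover).trans (card_union_le _ _)
    rw [card_map, card_compl] at hcard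
    have := card_le_univ s
    lia
  obtain ⟨a, b, hab⟩ := exists_embedding_mem_of_card_add_le_card_biUnion_add N hall
  replace hab (j) : G.Adj (a j) (b j) := by simpa [N] using hab j
  refine ⟨fun j ↦ a j, b, hab,
    (Subtype.val_injective.comp a.injective).sumElim b.injective fun j j' h ↦ ?_⟩
  exact c.valid (hab j') ((a j').2.trans (h ▸ (a j).2.symm))

end Matching

section MonomialIdeal

open scoped Pointwise

variable {σ R : Type*} [CommSemiring R] {I J : Ideal (MvPolynomial σ R)}

/-- Monomial ideals, over an arbitrary coefficient semiring and in arbitrarily many variables. -/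
def IsMonomialSpan (I : Ideal (MvPolynomial σ R)) : Prop :=
  ∃ S : Set (σ →₀ ℕ), I = Ideal.span ((fun m ↦ monomial m 1) '' S)

theorem IsMonomialSpan.mul (hI : IsMonomialSpan I) (hJ : IsMonomialSpan J) :
    IsMonomialSpan (I * J) := by
  obtain ⟨S, rfl⟩ := hI
  obtain ⟨T, rfl⟩ := hJ
  refine ⟨S + T, ?_⟩
  rw [Ideal.span_mul_span', ← Set.image2_add, ← Set.image2_mul, Set.image2_image_left,
    Set.image2_image_right, Set.image_image2]
  simp only [monomial_mul, mul_one]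

theorem IsMonomialSpan.pow (hI : IsMonomialSpan I) (k : ℕ) : IsMonomialSpan (I ^ k) := by
  induction k with
  | zero => exact ⟨{0}, by simp⟩
  | succ k ih => exact pow_succ I k ▸ ih.mul hI

theorem mem_of_forall_monomial_mem {f : MvPolynomial σ R}
    (hf : ∀ m ∈ f.support, monomial m 1 ∈ I) : f ∈ I := by
  rw [f.as_sum]
  refine Ideal.sum_mem _ fun m hm ↦ ?_
  simpa [C_mul_monomial] using I.mul_mem_left (C (coeff m f)) (hf m hm)

theorem IsMonomialSpan.monomial_mem (hI : IsMonomialSpan I) {f : MvPolynomial σ R} (hf : f ∈ I)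
    {m : σ →₀ ℕ} (hm : m ∈ f.support) : monomial m 1 ∈ I := by
  obtain ⟨S, rfl⟩ := hI
  obtain ⟨s, hs, hsm⟩ := mem_ideal_span_monomial_image.1 hf m hm
  exact Ideal.mem_of_dvd _ (monomial_dvd_monomial.2 ⟨.inr hsm, one_dvd 1⟩)
    (Ideal.subset_span ⟨s, hs, rfl⟩)

theorem IsMonomialSpan.mul_X_pow_mem_iff (hI : IsMonomialSpan I) {f : MvPolynomial σ R} {i : σ}
    {k : ℕ} : f * X i ^ k ∈ I ↔ ∀ m ∈ f.support, monomial (m + Finsupp.single i k) 1 ∈ I := by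
  have hsupp : (f * X i ^ k).support = f.support.map (addRightEmbedding (Finsupp.single i k)) := by
    rw [X_pow_eq_monomial]
    exact AddMonoidAlgebra.support_coeff_mul_single f _ (by simp) _
  refine ⟨fun hf m hm ↦ hI.monomial_mem hf ?_, fun h ↦ mem_of_forall_monomial_mem ?_⟩
  · rw [hsupp]
    exact Finset.mem_map_of_mem _ hm
  · rw [hsupp]
    exact Finset.forall_mem_map.2 h

theorem span_X_image_eq_ker_killCompl (C : Set σ) :
    Ideal.span (X '' C) = RingHom.ker
      (killCompl Subtype.val_injective : MvPolynomial σ R →ₐ[R] MvPolynomial ↥Cᶜ R) := by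
  ext f
  simp only [mem_ideal_span_X_image, RingHom.mem_ker, MvPolynomial.ext_iff, coeff_killCompl,
    coeff_zero]
  constructor
  · intro h s
    by_contra hs
    obtain ⟨v, hv, hne⟩ := h _ (mem_support_iff.2 hs)
    exact hne (Finsupp.mapDomain_of_notMem_range _ _ (by simpa using hv))
  · intro h m hm
    by_contra! hzero
    refine mem_support_iff.1 hm ?_
    rw [← Finsupp.mapDomain_comapDomain _ Subtype.val_injective m fun v hv ↦ ?_]
    · exact h _
    · simpa using fun hvC ↦ Finsupp.mem_support_iff.1 hv (hzero v hvC)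

theorem isPrime_span_X_image {σ R : Type*} [CommRing R] [IsDomain R] (C : Set σ) :
    (Ideal.span (X '' C : Set (MvPolynomial σ R))).IsPrime :=
  span_X_image_eq_ker_killCompl (R := R) C ▸ RingHom.ker_isPrime _

theorem le_sum_of_mem_span_X_image_pow {C : Finset σ} {k : ℕ} {f : MvPolynomial σ R}
    (hf : f ∈ Ideal.span (X '' (C : Set σ)) ^ k) {m : σ →₀ ℕ} (hm : m ∈ f.support) :
    k ≤ ∑ v ∈ C, m v := by
  classical
  induction k generalizing f m with
  | zero => exact Nat.zero_le _
  | succ k ih =>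
    rw [pow_succ] at hf
    induction hf using Submodule.mul_induction_on' with
    | mem_mul_mem g hg h hh =>
      obtain ⟨m₁, hm₁, m₂, hm₂, rfl⟩ := Finset.mem_add.1 (support_mul g h hm)
      obtain ⟨c, hc, hmc⟩ := mem_ideal_span_X_image.1 hh m₂ hm₂
      have hpos : 1 ≤ ∑ v ∈ C, m₂ v :=
        (Nat.one_le_iff_ne_zero.2 hmc).trans
          (Finset.single_le_sum (fun _ _ ↦ Nat.zero_le _) (Finset.mem_coe.1 hc))
      simpa [Finset.sum_add_distrib] using add_le_add (ih hg hm₁) hpos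
    | add g _ h _ ihg ihh => exact (Finset.mem_union.1 (support_add hm)).elim ihg ihh

end MonomialIdeal

section EdgeIdeal

variable {σ R : Type*} [CommSemiring R] {G : SimpleGraph σ}

/-- The edge ideal of a graph on an arbitrary set of variables, over an arbitrary coefficient
semiring. -/
noncomputable def edgeIdeal (R : Type*) [CommSemiring R] (G : SimpleGraph σ) :
    Ideal (MvPolynomial σ R) :=
  Ideal.span {p | ∃ a b, G.Adj a b ∧ p = X a * X b}

theorem X_mul_X_mem_edgeIdeal {a b : σ} (h : G.Adj a b) : X a * X b ∈ edgeIdeal R G :=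
  Ideal.subset_span ⟨a, b, h, rfl⟩

theorem edgeIdeal_le_iff {J : Ideal (MvPolynomial σ R)} :
    edgeIdeal R G ≤ J ↔ ∀ a b, G.Adj a b → X a * X b ∈ J := by
  refine Ideal.span_le.trans ⟨fun h a b hab ↦ h ⟨a, b, hab, rfl⟩, ?_⟩
  rintro h _ ⟨a, b, hab, rfl⟩
  exact h a b hab

theorem map_edgeIdeal_le_iff {S : Type*} [CommSemiring S] {J : Ideal S}
    (φ : MvPolynomial σ R →+* S) :
    (edgeIdeal R G).map φ ≤ J ↔ ∀ a b, G.Adj a b → φ (X a) * φ (X b) ∈ J := by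
  simp [Ideal.map_le_iff_le_comap, edgeIdeal_le_iff]

theorem edgeIdeal_le_span_X_image {C : Set σ} (hC : G.IsVertexCover C) :
    edgeIdeal R G ≤ Ideal.span (X '' C) :=
  edgeIdeal_le_iff.2 fun a b hab ↦ (hC hab).elim
    (fun ha ↦ Ideal.mul_mem_right _ _ (Ideal.subset_span ⟨a, ha, rfl⟩))
    fun hb ↦ Ideal.mul_mem_left _ _ (Ideal.subset_span ⟨b, hb, rfl⟩)

theorem isMonomialSpan_edgeIdeal : IsMonomialSpan (edgeIdeal R G) := by
  refine ⟨{m | ∃ a b, G.Adj a b ∧ m = Finsupp.single a 1 + Finsupp.single b 1},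
    congrArg Ideal.span ?_⟩
  ext p
  constructor
  · rintro ⟨a, b, hab, rfl⟩
    exact ⟨_, ⟨a, b, hab, rfl⟩, by simp [X, monomial_mul]⟩
  · rintro ⟨_, ⟨a, b, hab, rfl⟩, rfl⟩
    exact ⟨a, b, hab, by simp [X, monomial_mul]⟩

theorem prod_X_mem_edgeIdeal_pow [Fintype σ] (hG : G.IsBipartite) {k : ℕ}
    (hk : ∀ C : Finset σ, G.IsVertexCover C → k ≤ C.card) :
    ∏ v, X v ∈ edgeIdeal R G ^ k := by
  obtain ⟨a, b, hab, hinj⟩ := exists_matching_of_le_card_vertexCover hG hk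
  have hmem : ∏ j, X (a j) * X (b j) ∈ edgeIdeal R G ^ k := by
    simpa using Ideal.prod_mem_prod (s := Finset.univ) (I := fun _ ↦ edgeIdeal R G)
      fun j _ ↦ X_mul_X_mem_edgeIdeal (R := R) (hab j)
  refine Ideal.mem_of_dvd _ ?_ hmem
  calc ∏ j, X (a j) * X (b j)
      = ∏ x, X (Sum.elim a b x) := by simp [Finset.prod_mul_distrib, Fintype.prod_sum_type]
    _ = ∏ v ∈ Finset.univ.map ⟨Sum.elim a b, hinj⟩, X v := by rw [Finset.prod_map]; rfl
    _ ∣ ∏ v, X v := Finset.prod_dvd_prod_of_subset _ _ _ (Finset.subset_univ _)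

/-- The proof polarizes `x^w`: in the graph where each vertex `v` is replaced by `w v` copies, every
vertex cover contains all copies of the vertices in some vertex cover of `G`. -/
theorem monomial_mem_edgeIdeal_pow [Finite σ] (hG : G.IsBipartite) {k : ℕ} {w : σ →₀ ℕ}
    (hw : ∀ C : Finset σ, G.IsVertexCover C → k ≤ ∑ v ∈ C, w v) :
    monomial w 1 ∈ edgeIdeal R G ^ k := by
  classical
  have := Fintype.ofFinite σ
  let π : (Σ v, Fin (w v)) → σ := Sigma.fst
  have hcover (D : Finset (Σ v, Fin (w v))) (hD : (G.comap π).IsVertexCover D) : k ≤ D.card := by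
    let C : Finset σ := {v | ∀ j, ⟨v, j⟩ ∈ D}
    have hC : G.IsVertexCover C := by
      intro a b hab
      by_contra! h
      obtain ⟨⟨x, hx⟩, y, hy⟩ : (∃ x, ⟨a, x⟩ ∉ D) ∧ ∃ y, ⟨b, y⟩ ∉ D := by simpa [C] using h
      exact (hD (v := ⟨a, x⟩) (w := ⟨b, y⟩) hab).elim hx hy
    calc k ≤ ∑ v ∈ C, w v := hw C hC
      _ = (C.sigma fun v ↦ (Finset.univ : Finset (Fin (w v)))).card := by simp
      _ ≤ D.card := Finset.card_le_card fun x hx ↦ by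
        simp only [C, Finset.mem_sigma, Finset.mem_filter_univ] at hx
        exact hx.1 x.2
  have hpol : ∏ x, X x ∈ edgeIdeal R (G.comap π) ^ k :=
    prod_X_mem_edgeIdeal_pow (hG.of_hom (SimpleGraph.Hom.comap π G)) hcover
  have hmap : (edgeIdeal R (G.comap π)).map
      (rename π : MvPolynomial _ R →ₐ[R] MvPolynomial σ R).toRingHom ≤ edgeIdeal R G :=
    (map_edgeIdeal_le_iff _).2 fun a b hab ↦ by
      simpa using X_mul_X_mem_edgeIdeal (R := R) (SimpleGraph.comap_adj.1 hab)
  have hprod : rename π (∏ x, X x) = monomial w (1 : R) := by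
    simp [π, monomial_eq, Fintype.prod_sigma, Finsupp.prod_fintype]
  rw [← hprod]
  refine Ideal.pow_right_mono hmap k ?_
  rw [← Ideal.map_pow]
  exact Ideal.mem_map_of_mem _ hpol

end EdgeIdeal

section Colon

theorem colon_pow_le_pow_colon {A : Type*} [CommSemiring A] (I : Ideal A) (x : A) (k : ℕ) :
    I.colon {x} ^ k ≤ (I ^ k).colon {x ^ k} := by
  intro f hf
  have hle : I.colon {x} * Ideal.span {x} ≤ I := by
    rw [mul_comm, Ideal.span_singleton_mul_le_iff]
    exact fun r hr ↦ mul_comm r x ▸ Submodule.mem_colon_singleton.1 hr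
  refine Submodule.mem_colon_singleton.2 (Ideal.pow_right_mono hle k ?_)
  rw [mul_pow]
  exact Ideal.mul_mem_mul hf (Ideal.pow_mem_pow (Ideal.mem_span_singleton_self x) k)

variable {σ R : Type*} {G : SimpleGraph σ} {i : σ} {k : ℕ}

theorem map_aeval_update_X_edgeIdeal_le_colon [CommSemiring R] [DecidableEq σ] :
    (edgeIdeal R G).map (aeval (R := R) (Function.update X i 1)).toRingHom ≤
      (edgeIdeal R G).colon {X i} := by
  refine (map_edgeIdeal_le_iff _).2 fun a b hab ↦ Submodule.mem_colon_singleton.2 ?_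
  have hmem := X_mul_X_mem_edgeIdeal (R := R) hab
  by_cases ha : a = i
  · subst ha
    simpa [hab.ne', mul_comm] using hmem
  · by_cases hb : b = i
    · subst hb
      simpa [ha] using hmem
    · simpa [ha, hb] using Ideal.mul_mem_right (X i) _ hmem

theorem aeval_update_X_one_monomial [CommSemiring R] [DecidableEq σ] (m : σ →₀ ℕ) :
    aeval (R := R) (Function.update X i 1) (monomial m (1 : R)) =
      (monomial (m.erase i) 1 : MvPolynomial σ R) := by
  rw [aeval_monomial, map_one, one_mul, ← Finsupp.mul_prod_erase' m i _ fun _ ↦ pow_zero _,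
    Function.update_self, one_pow, one_mul, monomial_eq, C_1, one_mul]
  exact Finsupp.prod_congr fun j hj ↦ by
    rw [Function.update_of_ne (by rintro rfl; simp at hj)]

theorem monomial_erase_mem_edgeIdeal_colon_pow [CommSemiring R] {m : σ →₀ ℕ}
    (hm : monomial m 1 ∈ edgeIdeal R G ^ k) :
    monomial (m.erase i) 1 ∈ (edgeIdeal R G).colon {X i} ^ k := by
  classical
  rw [← aeval_update_X_one_monomial]
  refine Ideal.pow_right_mono map_aeval_update_X_edgeIdeal_le_colon k ?_
  rw [← Ideal.map_pow]
  exact Ideal.mem_map_of_mem _ hm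

theorem edgeIdeal_pow_colon_X_pow [CommSemiring R] :
    (edgeIdeal R G ^ k).colon {X i ^ k} = (edgeIdeal R G).colon {X i} ^ k := by
  refine le_antisymm (fun f hf ↦ mem_of_forall_monomial_mem fun m hm ↦ ?_)
    (colon_pow_le_pow_colon _ _ k)
  rw [Submodule.mem_colon_singleton, smul_eq_mul,
    (isMonomialSpan_edgeIdeal.pow k).mul_X_pow_mem_iff] at hf
  have herase : (m + Finsupp.single i k).erase i ≤ m := by
    simpa [Finsupp.erase_add] using le_self_add.trans_eq (Finsupp.erase_add_single i m)
  exact Ideal.mem_of_dvd _ (monomial_dvd_monomial.2 ⟨.inr herase, one_dvd 1⟩)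
    (monomial_erase_mem_edgeIdeal_colon_pow (hf m hm))

theorem edgeIdeal_colon_X_le_span_X_image [CommRing R] [IsDomain R] {C : Set σ}
    (hC : G.IsVertexCover C) (hi : i ∉ C) :
    (edgeIdeal R G).colon {X i} ≤ Ideal.span (X '' C) := by
  intro g hg
  have hgX : g * X i ∈ Ideal.span (X '' C) :=
    edgeIdeal_le_span_X_image hC (Submodule.mem_colon_singleton.1 hg)
  refine ((isPrime_span_X_image C).mem_or_mem hgX).resolve_right fun hX ↦ hi ?_
  simpa [mem_ideal_span_X_image, support_X, Finsupp.single_apply_ne_zero] using hX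

end Colon

section SymbolicPower

/-- The `k`-th symbolic power of an ideal, as the intersection of the `k`-th powers of its
associated primes. This naive form agrees with the usual notion for squarefree monomial ideals. -/
noncomputable def symbolicPower {A : Type*} [CommRing A] (J : Ideal A) (k : ℕ) : Ideal A :=
  ⨅ p ∈ associatedPrimes A (A ⧸ J), p ^ k

theorem pow_le_symbolicPower {A : Type*} [CommRing A] (J : Ideal A) (k : ℕ) :
    J ^ k ≤ symbolicPower J k := by
  refine le_iInf₂ fun p hp ↦ Ideal.pow_right_mono ?_ k
  simpa [Submodule.annihilator_top, Ideal.annihilator_quotient] using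
    (AssociatedPrimes.mem_iff.1 hp).annihilator_le

theorem symbolicPower_le_pow {A : Type*} [CommRing A] [IsNoetherianRing A] {J P : Ideal A}
    [P.IsPrime] (hJP : J ≤ P) (k : ℕ) : symbolicPower J k ≤ P ^ k := by
  obtain ⟨p, hp, hpP⟩ := Ideal.exists_minimalPrimes_le hJP
  refine (iInf₂_le p ?_).trans (Ideal.pow_right_mono hpP k)
  apply Module.associatedPrimes.minimalPrimes_annihilator_subset_associatedPrimes
  rwa [Ideal.annihilator_quotient]

variable {σ R : Type*} [Finite σ] [CommRing R] [IsDomain R] [IsNoetherianRing R]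
  {G : SimpleGraph σ}

theorem symbolicPower_edgeIdeal_colon_le (hG : G.IsBipartite) (k : ℕ) (i : σ) :
    symbolicPower ((edgeIdeal R G).colon {X i}) k ≤ (edgeIdeal R G ^ k).colon {X i ^ k} := by
  have := Fintype.ofFinite σ
  intro f hf
  rw [Submodule.mem_colon_singleton, smul_eq_mul,
    (isMonomialSpan_edgeIdeal.pow k).mul_X_pow_mem_iff]
  intro m hm
  refine monomial_mem_edgeIdeal_pow hG fun C hC ↦ ?_
  by_cases hi : i ∈ C
  · calc k ≤ (m + Finsupp.single i k) i := by simp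
      _ ≤ ∑ v ∈ C, (m + Finsupp.single i k) v :=
        Finset.single_le_sum (fun _ _ ↦ Nat.zero_le _) hi
  · have := isPrime_span_X_image (R := R) (C : Set σ)
    have hfC : f ∈ Ideal.span (X '' (C : Set σ)) ^ k :=
      symbolicPower_le_pow (edgeIdeal_colon_X_le_span_X_image hC hi) k hf
    calc k ≤ ∑ v ∈ C, m v := le_sum_of_mem_span_X_image_pow hfC hm
      _ ≤ ∑ v ∈ C, (m + Finsupp.single i k) v := Finset.sum_le_sum fun v _ ↦ by simp

theorem stmt16_general (hG : G.IsBipartite) (k : ℕ) (i : σ) :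
    (edgeIdeal R G).colon {X i} ^ k = symbolicPower ((edgeIdeal R G).colon {X i}) k ∧
    (edgeIdeal R G ^ k).colon {X i ^ k} = (edgeIdeal R G).colon {X i} ^ k :=
  ⟨le_antisymm (pow_le_symbolicPower _ k)
    ((symbolicPower_edgeIdeal_colon_le hG k i).trans_eq edgeIdeal_pow_colon_X_pow),
    edgeIdeal_pow_colon_X_pow⟩

end SymbolicPower

/-- for a bipartite graph `G`, the colon ideal `(I(G) : x_i)` is
normally torsion-free and `(I(G)^k : x_i^k) = (I(G) : x_i)^k`. -/
theorem stmt16 (K : Type) [Field K] (n : ℕ) (G : SimpleGraph (Fin n))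
    (hbip : G.Colorable 2) (k : ℕ) (hk : 1 ≤ k) (i : Fin n) :
    ((edgeIdealG K G).colon (Ideal.span {(MvPolynomial.X i : MvPoly K (Fin n))})) ^ k =
      symbPow K ((edgeIdealG K G).colon
        (Ideal.span {(MvPolynomial.X i : MvPoly K (Fin n))})) k ∧
    (edgeIdealG K G ^ k).colon (Ideal.span {(MvPolynomial.X i : MvPoly K (Fin n)) ^ k}) =
      ((edgeIdealG K G).colon (Ideal.span {(MvPolynomial.X i : MvPoly K (Fin n))})) ^ k := by
  simp only [Ideal.colon_span]
  exact stmt16_general hbip k i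
end
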